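/- Let p ≥ 1 be an integer and a > 2p a real number. Assume (ε_n) is a martingale difference sequence with E[ε_{n+1}² | F_n] = σ² a.s. for all n and sup_{n≥0} E[|ε_{n+1}|^a | F_n] < ∞ a.s. Assume the explosion coefficient f_n tends to zero a.s. and that there exists a positive random sequence (α_n) increasing to infinity and a symmetric positive definite d×d matrix L such that S_n/α_n → L a.s. Set a_n(1) = M_n^t S_{n-1}^{-1} M_n − M_n^t S_n^{-1} M_n. Then almost surely lim_{n→∞} (1/log d_n) Σ_{k=1}^n (a_k(1))^p equals σ² if p = 1 and equals 0 if p > 1. -/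

import Mathlib

open MeasureTheory ProbabilityTheory Filter Finset Matrix Topology

noncomputable section

/-- `S_n = S + ∑_{k=0}^n Φ_k Φ_kᵗ`. -/
def Smat {Ω : Type*} {d : ℕ} (S : Matrix (Fin d) (Fin d) ℝ)
    (Φ : ℕ → Ω → Fin d → ℝ) (n : ℕ) (ω : Ω) : Matrix (Fin d) (Fin d) ℝ :=
  S + ∑ k ∈ Finset.range (n + 1), vecMulVec (Φ k ω) (Φ k ω)

/-- The explosion coefficient `f_n = Φ_nᵗ S_n⁻¹ Φ_n`. -/
def expl {Ω : Type*} {d : ℕ} (S : Matrix (Fin d) (Fin d) ℝ)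
    (Φ : ℕ → Ω → Fin d → ℝ) (n : ℕ) (ω : Ω) : ℝ :=
  Φ n ω ⬝ᵥ ((Smat S Φ n ω)⁻¹ *ᵥ Φ n ω)

/-- The vector martingale transform `M_n = M_0 + ∑_{k=1}^n Φ_{k-1} ε_k`. -/
def Mart {Ω : Type*} {d : ℕ} (M0 : Ω → Fin d → ℝ) (Φ : ℕ → Ω → Fin d → ℝ)
    (ε : ℕ → Ω → ℝ) (n : ℕ) (ω : Ω) : Fin d → ℝ :=
  M0 ω + ∑ k ∈ Finset.range n, ε (k + 1) ω • Φ k ω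

/-- `ℓ(p) = d σ^{2p} ∏_{j=1}^{p-1} (d + 2j)`. -/
def elllim (d p : ℕ) (σ : ℝ) : ℝ :=
  (d : ℝ) * σ ^ (2 * p) * ∏ j ∈ Finset.Icc 1 (p - 1), ((d : ℝ) + 2 * (j : ℝ))

/-!
Write `A n = S + ∑_{k < n} Φ_k Φ_kᵗ`, so that `A (n + 1) = S_n`. Expanding `M_{n+1}ᵗ S_n⁻¹ M_{n+1}`
along `M_{n+1} = M_n + ε_{n+1} Φ_n` and summing expresses `∑ a_k(1)` as `σ² ∑ f_k` plus two
martingale transforms and a remainder, while `log d_n - log d_{n-1} = -log (1 - f_n) ∼ f_n`. It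
therefore suffices to show that the transforms and `M_nᵗ S_{n-1}⁻¹ M_n` are `o (log d_n)`; for
`p > 1` one uses moreover `a_n(1) ≤ f_n M_nᵗ S_{n-1}⁻¹ M_n`.

Since `S_n / α_n → L` is invertible, the condition number of `S_n` stays bounded, and
`M_nᵗ S_{n-1}⁻¹ M_n` is comparable to the scalar `W_n = ‖M_n‖² / tr A_n`. The latter satisfies a
recursion with contraction factor `1 - γ_n`, where `γ_n = ‖Φ_n‖² / tr A_{n+1}` is comparable to
`f_n`. Applying the strong law for martingale transforms to the expansion of `W_n ^ q`, with
`p < q < a / 2`, gives `∑ γ_k W_k ^ q + max_k W_k ^ q = O (log d_n)`, which controls all the error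
terms. As the normalizer of that strong law one takes this left-hand side itself (plus
`1 + ∑ γ_k`): it tends to infinity, and the growth estimate then follows by absorbing the
`o`-terms.
-/

section PowerInequalities

lemma one_add_rpow_le_quadratic {q t : ℝ} (hq : 0 ≤ q) (ht : |q * t| ≤ 1) (hpos : 0 < 1 + t) :
    (1 + t) ^ q ≤ 1 + q * t + (q * t) ^ 2 := by
  have hexp : (1 + t) ^ q ≤ Real.exp (q * t) := by
    rw [Real.rpow_def_of_pos hpos]
    refine Real.exp_le_exp.2 ?_
    nlinarith [Real.log_le_sub_one_of_pos hpos]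
  linarith [(abs_le.1 (Real.abs_exp_sub_one_sub_id_le ht)).2]

lemma rpow_le_one_add_rpow {x s r : ℝ} (hx : 0 ≤ x) (hs : 0 ≤ s) (hsr : s ≤ r) :
    x ^ s ≤ 1 + x ^ r := by
  rcases le_total x 1 with hx1 | hx1
  · exact (Real.rpow_le_one hx hx1 hs).trans (le_add_of_nonneg_right (Real.rpow_nonneg hx r))
  · exact (Real.rpow_le_rpow_of_exponent_le hx1 hsr).trans (le_add_of_nonneg_left zero_le_one)

lemma rpow_sub_one_mul_self {x : ℝ} (hx : 0 ≤ x) {q : ℝ} (hq : q ≠ 0) :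
    x ^ (q - 1) * x = x ^ q := by
  simpa using (Real.rpow_add_one' hx (y := q - 1) (by simpa using hq)).symm

lemma rpow_quadratic_le_of_small {q A B D : ℝ} (hq : 0 < q) (hA : 0 < A) (hD : 0 ≤ D)
    (hB : B ^ 2 ≤ A * D) (hDA : (9 * q ^ 2 + 10) * D ≤ A) :
    (A + 2 * B + D) ^ q ≤
      A ^ q + 2 * q * A ^ (q - 1) * B + (q + 9 * q ^ 2) * (A ^ (q - 1) * D) := by
  set t := (2 * B + D) / A with ht
  set δ := D / A with hδ
  have hδ0 : 0 ≤ δ := by positivity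
  have hδA : (9 * q ^ 2 + 10) * δ ≤ 1 := by rwa [hδ, ← mul_div_assoc, div_le_one hA]
  have ht_sq : t ^ 2 ≤ 9 * δ := by
    have hDA' : D ≤ A := by nlinarith [mul_nonneg (sq_nonneg q) hD]
    have hBA : |B| ≤ A := abs_le_of_sq_le_sq (by nlinarith) hA.le
    have : (2 * B + D) ^ 2 ≤ 9 * (A * D) := by nlinarith [(abs_le.1 hBA).2]
    rw [ht, hδ, div_pow, div_le_iff₀ (by positivity)]
    calc (2 * B + D) ^ 2 ≤ 9 * (A * D) := this
      _ = 9 * (D / A) * A ^ 2 := by field_simp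
  have hqt : |q * t| ≤ 1 := by
    rw [← sq_le_one_iff_abs_le_one, mul_pow]
    nlinarith [mul_le_mul_of_nonneg_left ht_sq (sq_nonneg q)]
  have ht_lt : |t| < 1 := by
    rw [← sq_lt_one_iff_abs_lt_one]
    nlinarith [mul_nonneg (sq_nonneg q) hδ0]
  have hpos : 0 < 1 + t := by linarith [(abs_lt.1 ht_lt).1]
  calc (A + 2 * B + D) ^ q = A ^ q * (1 + t) ^ q := by
        rw [← Real.mul_rpow hA.le hpos.le, ht]
        congr 1
        field_simp
        ring
    _ ≤ A ^ q * (1 + q * t + q ^ 2 * (9 * δ)) := by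
        gcongr
        refine (one_add_rpow_le_quadratic hq.le hqt hpos).trans ?_
        rw [mul_pow]
        gcongr
    _ = _ := by
        rw [← rpow_sub_one_mul_self hA.le hq.ne', ht, hδ]
        field_simp
        ring

lemma rpow_sub_one_mul_abs_le {q k A B D : ℝ} (hq : 1 / 2 ≤ q) (hk : 0 ≤ k) (hA : 0 ≤ A)
    (hD : 0 ≤ D) (hB : B ^ 2 ≤ A * D) (hAD : A ≤ k * D) :
    A ^ (q - 1) * |B| ≤ (k + 1) * ((A + D) ^ (q - 1) * D) := by
  rcases hA.eq_or_lt with rfl | hA'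
  · have : B = 0 := by nlinarith
    simp only [this, abs_zero, mul_zero]
    positivity
  have hAD' : 0 < A + D := by positivity
  refine le_of_sq_le_sq ?_ (by positivity)
  have hsq : ∀ {x : ℝ}, 0 < x → (x ^ (q - 1)) ^ 2 * x = x ^ (2 * q - 1) := fun {x} hx => by
    rw [← Real.rpow_natCast, ← Real.rpow_mul hx.le, ← Real.rpow_add_one hx.ne']
    congr 1
    push_cast
    ring
  calc (A ^ (q - 1) * |B|) ^ 2 ≤ (A ^ (q - 1)) ^ 2 * (A * D) := by
        rw [mul_pow, sq_abs]
        gcongr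
    _ = A ^ (2 * q - 1) * D := by rw [← mul_assoc, hsq hA']
    _ ≤ (A + D) ^ (2 * q - 1) * D := by
        gcongr
        · linarith
        · linarith
    _ = ((A + D) ^ (q - 1)) ^ 2 * D * (A + D) := by rw [← hsq hAD']; ring
    _ ≤ ((A + D) ^ (q - 1)) ^ 2 * D * ((k + 1) ^ 2 * D) := by
        gcongr
        nlinarith [mul_nonneg hk hD, mul_nonneg (mul_nonneg hk hk) hD]
    _ = _ := by ring

lemma rpow_quadratic_le_of_large {q k A B D : ℝ} (hq : 1 / 2 ≤ q) (hk : 0 ≤ k) (hA : 0 ≤ A)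
    (hD : 0 ≤ D) (hB : B ^ 2 ≤ A * D) (hAD : A ≤ k * D) :
    (A + 2 * B + D) ^ q ≤
      A ^ q + 2 * q * A ^ (q - 1) * B + (2 ^ q + 2 * q) * (k + 1) * ((A + D) ^ (q - 1) * D) := by
  have hBle : |B| ≤ (A + D) / 2 :=
    abs_le_of_sq_le_sq (by nlinarith [sq_nonneg (A - D)]) (by positivity)
  have hmain : (A + 2 * B + D) ^ q ≤ 2 ^ q * (k + 1) * ((A + D) ^ (q - 1) * D) :=
    calc (A + 2 * B + D) ^ q ≤ (2 * (A + D)) ^ q := by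
          refine Real.rpow_le_rpow ?_ ?_ (by linarith)
          · linarith [(abs_le.1 hBle).1]
          · linarith [(abs_le.1 hBle).2]
      _ = 2 ^ q * ((A + D) ^ (q - 1) * (A + D)) := by
          rw [Real.mul_rpow (by norm_num) (by positivity),
            rpow_sub_one_mul_self (by positivity) (by linarith)]
      _ ≤ 2 ^ q * ((A + D) ^ (q - 1) * ((k + 1) * D)) := by
          gcongr
          linarith
      _ = _ := by ring
  have hcross : -(A ^ (q - 1) * B) ≤ (k + 1) * ((A + D) ^ (q - 1) * D) := by
    refine le_trans ?_ (rpow_sub_one_mul_abs_le hq hk hA hD hB hAD)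
    rw [← mul_neg]
    gcongr
    exact neg_le_abs B
  have hAq : 0 ≤ A ^ q := by positivity
  nlinarith [mul_le_mul_of_nonneg_left hcross (by linarith : 0 ≤ 2 * q)]

lemma exists_rpow_quadratic_le {q : ℝ} (hq : 1 / 2 ≤ q) : ∃ C : ℝ, 0 ≤ C ∧ ∀ A B D : ℝ,
    0 ≤ A → 0 ≤ D → B ^ 2 ≤ A * D →
      (A + 2 * B + D) ^ q ≤ A ^ q + 2 * q * A ^ (q - 1) * B + C * ((A + D) ^ (q - 1) * D) := by
  have hq0 : 0 < q := by linarith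
  set k : ℝ := 9 * q ^ 2 + 10
  set C₁ : ℝ := (2 ^ q + 2 * q) * (k + 1)
  set C₂ : ℝ := (q + 9 * q ^ 2) * 2
  refine ⟨max C₁ C₂, by positivity, fun A B D hA hD hB => ?_⟩
  have : 0 ≤ (A + D) ^ (q - 1) * D := by positivity
  rcases le_or_gt A (k * D) with hAD | hAD
  · refine (rpow_quadratic_le_of_large hq (by positivity) hA hD hB hAD).trans ?_
    gcongr
    exact le_max_left _ _
  have hA' : 0 < A := lt_of_le_of_lt (by positivity) hAD
  have hA_le : A ^ (q - 1) ≤ 2 * (A + D) ^ (q - 1) := by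
    rcases le_total 1 q with h1 | h1
    · have : A ^ (q - 1) ≤ (A + D) ^ (q - 1) := by
        gcongr
        linarith
      have : 0 ≤ (A + D) ^ (q - 1) := by positivity
      linarith
    · have hDA : D ≤ A := by nlinarith [mul_nonneg (sq_nonneg q) hD]
      calc A ^ (q - 1) ≤ (2⁻¹ * (A + D)) ^ (q - 1) :=
            Real.rpow_le_rpow_of_nonpos (by positivity) (by linarith) (by linarith)
        _ = 2 ^ (1 - q) * (A + D) ^ (q - 1) := by
            rw [Real.mul_rpow (by norm_num) (by positivity), Real.inv_rpow (by norm_num),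
              ← Real.rpow_neg (by norm_num), neg_sub]
        _ ≤ 2 ^ (1 : ℝ) * (A + D) ^ (q - 1) := by
            gcongr
            · norm_num
            · linarith
        _ = 2 * (A + D) ^ (q - 1) := by rw [Real.rpow_one]
  refine (rpow_quadratic_le_of_small hq0 hA' hD hB hAD.le).trans ?_
  refine add_le_add le_rfl ?_
  calc (q + 9 * q ^ 2) * (A ^ (q - 1) * D) ≤ (q + 9 * q ^ 2) * (2 * (A + D) ^ (q - 1) * D) := by
        gcongr
    _ = C₂ * ((A + D) ^ (q - 1) * D) := by ring
    _ ≤ max C₁ C₂ * ((A + D) ^ (q - 1) * D) := by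
        gcongr
        exact le_max_right _ _

lemma exists_abs_add_rpow_le {r : ℝ} (hr : 1 ≤ r) (hr2 : r ≤ 2) : ∃ C : ℝ, 0 ≤ C ∧ ∀ x y : ℝ,
    |x + y| ^ r ≤ |x| ^ r + r * (|x| ^ (r - 2) * x) * y + C * |y| ^ r := by
  obtain ⟨C, hC, h⟩ := exists_rpow_quadratic_le (q := r / 2) (by linarith)
  have hsq : ∀ z s : ℝ, (z ^ 2) ^ (s / 2) = |z| ^ s := fun z s => by
    rw [← sq_abs, ← Real.rpow_natCast, ← Real.rpow_mul (abs_nonneg z)]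
    congr 1
    push_cast
    ring
  have hsq' : ∀ z : ℝ, (z ^ 2) ^ (r / 2 - 1) = |z| ^ (r - 2) := fun z => by
    rw [← hsq]
    congr 1
    ring
  refine ⟨C, hC, fun x y => ?_⟩
  have hxy := h (x ^ 2) (x * y) (y ^ 2) (sq_nonneg x) (sq_nonneg y) (by rw [mul_pow])
  have hrem : (x ^ 2 + y ^ 2) ^ (r / 2 - 1) * y ^ 2 ≤ |y| ^ r := by
    rcases eq_or_ne y 0 with rfl | hy
    · simp only [ne_eq, OfNat.ofNat_ne_zero, not_false_eq_true, zero_pow, mul_zero]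
      positivity
    calc (x ^ 2 + y ^ 2) ^ (r / 2 - 1) * y ^ 2 ≤ (y ^ 2) ^ (r / 2 - 1) * y ^ 2 := by
          gcongr ?_ * _
          exact Real.rpow_le_rpow_of_nonpos (by positivity) (by nlinarith [sq_nonneg x])
            (by linarith)
      _ = |y| ^ r := by rw [rpow_sub_one_mul_self (sq_nonneg y) (by linarith), hsq]
  rw [show x ^ 2 + 2 * (x * y) + y ^ 2 = (x + y) ^ 2 by ring, hsq, hsq, hsq'] at hxy
  calc |x + y| ^ r ≤ _ := hxy
    _ ≤ |x| ^ r + 2 * (r / 2) * |x| ^ (r - 2) * (x * y) + C * |y| ^ r := by gcongr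
    _ = _ := by ring

lemma exists_add_rpow_sub_one_mul_le {q θ : ℝ} (hq : 1 ≤ q) (hθ : 0 < θ) :
    ∃ C : ℝ, 0 ≤ C ∧ ∀ w y : ℝ, 0 ≤ w → 0 ≤ y →
      (w + y) ^ (q - 1) * y ≤ θ * w ^ q + C * y ^ q := by
  set δ : ℝ := min 1 (θ / 2 ^ (q - 1))
  have hδ : 0 < δ := by positivity
  refine ⟨(δ⁻¹ + 1) ^ (q - 1), by positivity, fun w y hw hy => ?_⟩
  have : 0 ≤ q - 1 := by linarith
  rcases le_or_gt y (δ * w) with hyw | hyw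
  · have hy1 : y ≤ w := hyw.trans (mul_le_of_le_one_left hw (min_le_left _ _))
    have : 0 ≤ (δ⁻¹ + 1) ^ (q - 1) * y ^ q := by positivity
    calc (w + y) ^ (q - 1) * y ≤ (2 * w) ^ (q - 1) * (θ / 2 ^ (q - 1) * w) := by
          gcongr
          · linarith
          · exact hyw.trans (by gcongr; exact min_le_right _ _)
      _ = θ * w ^ q := by
          rw [Real.mul_rpow (by norm_num) hw, ← rpow_sub_one_mul_self hw (by linarith : q ≠ 0)]
          field_simp
      _ ≤ _ := by linarith
  · have : 0 ≤ θ * w ^ q := by positivity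
    calc (w + y) ^ (q - 1) * y ≤ ((δ⁻¹ + 1) * y) ^ (q - 1) * y := by
          gcongr
          have : w ≤ δ⁻¹ * y := by rw [inv_mul_eq_div, le_div_iff₀ hδ]; linarith
          linarith
      _ = (δ⁻¹ + 1) ^ (q - 1) * y ^ q := by
          rw [Real.mul_rpow (by positivity) hy, mul_assoc,
            rpow_sub_one_mul_self hy (by linarith : q ≠ 0)]
      _ ≤ _ := by linarith

lemma exists_contraction_rpow_le {q : ℝ} (hq : 1 ≤ q) : ∃ C : ℝ, 0 ≤ C ∧ ∀ W γ x e : ℝ,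
    0 ≤ W → 0 ≤ γ → γ ≤ 1 → x ^ 2 ≤ (1 - γ) * W * γ →
      ((1 - γ) * W + 2 * (e * x) + e ^ 2 * γ) ^ q ≤
        W ^ q - 1 / 2 * (γ * W ^ q) + 2 * q * ((1 - γ) * W) ^ (q - 1) * x * e
          + C * (γ * (e ^ 2) ^ q) := by
  obtain ⟨C, hC, htaylor⟩ := exists_rpow_quadratic_le (q := q) (by linarith)
  obtain ⟨C', hC', hyoung⟩ :=
    exists_add_rpow_sub_one_mul_le hq (θ := 1 / (2 * (C + 1))) (by positivity)
  refine ⟨C * C', by positivity, fun W γ x e hW hγ hγ1 hx => ?_⟩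
  set A := (1 - γ) * W
  have hA : 0 ≤ A := mul_nonneg (by linarith) hW
  have hAW : A ≤ W := mul_le_of_le_one_left hW (by linarith)
  have hAq : A ^ q ≤ (1 - γ) * W ^ q := by
    rw [Real.mul_rpow (by linarith) hW]
    gcongr
    simpa using Real.rpow_le_rpow_of_exponent_ge' (by linarith : 0 ≤ 1 - γ) (by linarith)
      zero_le_one hq
  have hrem : C * ((A + e ^ 2 * γ) ^ (q - 1) * (e ^ 2 * γ)) ≤
      γ * (1 / 2 * W ^ q + C * C' * (e ^ 2) ^ q) := by
    calc C * ((A + e ^ 2 * γ) ^ (q - 1) * (e ^ 2 * γ))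
        ≤ C * ((W + e ^ 2) ^ (q - 1) * (e ^ 2 * γ)) := by
          have : e ^ 2 * γ ≤ e ^ 2 := mul_le_of_le_one_right (sq_nonneg e) hγ1
          gcongr
      _ = γ * (C * ((W + e ^ 2) ^ (q - 1) * e ^ 2)) := by ring
      _ ≤ γ * (C * (1 / (2 * (C + 1)) * W ^ q + C' * (e ^ 2) ^ q)) := by
          gcongr
          exact hyoung W (e ^ 2) hW (sq_nonneg e)
      _ = γ * (C / (2 * (C + 1)) * W ^ q + C * C' * (e ^ 2) ^ q) := by ring
      _ ≤ _ := by
          gcongr ?_ * (?_ * _ + _)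
          rw [div_le_div_iff₀ (by positivity) (by positivity)]
          linarith
  have htay := htaylor A (e * x) (e ^ 2 * γ) hA (by positivity)
    (by rw [mul_pow]; nlinarith [sq_nonneg e])
  linarith

end PowerInequalities

section SeriesLemmas

lemma sub_div_rpow_le {s X Y : ℝ} (hs : 1 < s) (hX : 0 < X) (hY : 0 < Y) :
    (Y - X) / Y ^ s ≤ (X ^ (1 - s) - Y ^ (1 - s)) / (s - 1) := by
  rw [le_div_iff₀ (by linarith)]
  set u := X / Y with hu
  have hu0 : 0 < u := by positivity
  have hX' : X ^ (1 - s) = Y ^ (1 - s) * u ^ (1 - s) := by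
    rw [← Real.mul_rpow hY.le hu0.le, hu]
    congr 1
    field_simp
  have hleft : (Y - X) / Y ^ s = Y ^ (1 - s) * (1 - u) := by
    rw [Real.rpow_sub hY, Real.rpow_one, hu]
    field_simp
  have hbernoulli : 1 + (s - 1) * (1 - u) ≤ u ^ (1 - s) := by
    rw [Real.rpow_def_of_pos hu0]
    nlinarith [Real.add_one_le_exp (Real.log u * (1 - s)), Real.log_le_sub_one_of_pos hu0]
  have : 0 ≤ Y ^ (1 - s) := by positivity
  rw [hX', hleft]
  nlinarith

lemma summable_div_rpow_of_sum_le {x R : ℕ → ℝ} {s : ℝ} (hs : 1 < s) (hx : ∀ n, 0 ≤ x n)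
    (hR : ∀ n, 1 + ∑ k ∈ range (n + 1), x k ≤ R n) : Summable fun n => x n / R n ^ s := by
  set X : ℕ → ℝ := fun n => 1 + ∑ k ∈ range n, x k with hX
  have hX1 : ∀ n, 1 ≤ X n := fun n => le_add_of_nonneg_right (sum_nonneg fun _ _ => hx _)
  have hX0 : ∀ n, 0 < X n := fun n => by linarith [hX1 n]
  have hterm : ∀ n, x n / R n ^ s ≤ (X n ^ (1 - s) - X (n + 1) ^ (1 - s)) / (s - 1) := fun n => by
    refine le_trans ?_ (sub_div_rpow_le hs (hX0 n) (hX0 (n + 1)))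
    have hxn : x n = X (n + 1) - X n := by simp only [hX, sum_range_succ]; ring
    rw [← hxn]
    have hpos := hX0 (n + 1)
    gcongr
    · exact hx n
    · exact hR n
  refine summable_of_sum_range_le (c := 1 / (s - 1))
    (fun n => div_nonneg (hx n) (Real.rpow_nonneg ((hX0 _).le.trans (hR n)) _)) fun n => ?_
  calc ∑ i ∈ range n, x i / R i ^ s
      ≤ ∑ i ∈ range n, (X i ^ (1 - s) - X (i + 1) ^ (1 - s)) / (s - 1) :=
        sum_le_sum fun i _ => hterm i
    _ = (1 - X n ^ (1 - s)) / (s - 1) := by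
        rw [← sum_div, sum_range_sub', show X 0 = 1 by simp [hX], Real.one_rpow]
    _ ≤ 1 / (s - 1) := by
        have : 0 ≤ X n ^ (1 - s) := Real.rpow_nonneg (hX0 n).le _
        have : 0 < s - 1 := by linarith
        gcongr
        linarith

lemma sum_range_succ_eq_of_sum_div {y R : ℕ → ℝ} (hR : ∀ n, R n ≠ 0) (l : ℝ) (n : ℕ) :
    ∑ k ∈ range (n + 1), y k =
      R n * (∑ k ∈ range (n + 1), y k / R k - l) + R 0 * l
        - ∑ k ∈ range n, (∑ j ∈ range (k + 1), y j / R j - l) * (R (k + 1) - R k) := by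
  induction n with
  | zero =>
    simp only [zero_add, sum_range_one, range_zero, sum_empty]
    field_simp [hR 0]
    ring
  | succ n ih =>
    have hy : y (n + 1) = R (n + 1) * (y (n + 1) / R (n + 1)) := (mul_div_cancel₀ _ (hR _)).symm
    rw [sum_range_succ, ih, sum_range_succ _ (n + 1),
      sum_range_succ (fun k => (∑ j ∈ range (k + 1), y j / R j - l) * (R (k + 1) - R k)), hy,
      mul_div_cancel_left₀ _ (hR (n + 1))]
    ring

lemma isLittleO_sum_of_tendsto_sum_div {y R : ℕ → ℝ} (hR : Monotone R) (hpos : ∀ n, 0 < R n)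
    (hRtop : Tendsto R atTop atTop) {l : ℝ}
    (hl : Tendsto (fun n => ∑ k ∈ range n, y k / R k) atTop (𝓝 l)) :
    (fun n => ∑ k ∈ range (n + 1), y k) =o[atTop] R := by
  set T : ℕ → ℝ := fun n => ∑ k ∈ range (n + 1), y k / R k - l
  have hT : T =o[atTop] (fun _ => (1 : ℝ)) := by
    rw [Asymptotics.isLittleO_one_iff]
    simpa only [sub_self] using ((tendsto_add_atTop_iff_nat 1).2 hl).sub_const l
  have htel : ∀ n, ∑ k ∈ range n, (R (k + 1) - R k) = R n - R 0 := sum_range_sub R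
  have htel_top : Tendsto (fun n => ∑ k ∈ range n, (R (k + 1) - R k)) atTop atTop := by
    simp only [htel]
    exact tendsto_atTop_add_const_right _ (-R 0) hRtop
  have hsum : (fun n => ∑ k ∈ range n, T k * (R (k + 1) - R k)) =o[atTop] R := by
    have hterm := hT.mul_isBigO (Asymptotics.isBigO_refl (fun n => R (n + 1) - R n) atTop)
    simp only [one_mul] at hterm
    refine (hterm.sum_range (fun n => sub_nonneg.2 (hR n.le_succ)) htel_top).trans_isBigO ?_
    refine Asymptotics.IsBigO.of_bound 1 (Eventually.of_forall fun n => ?_)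
    rw [htel, Real.norm_of_nonneg (by linarith [hR n.zero_le]), Real.norm_of_nonneg (hpos n).le]
    linarith [hpos 0]
  have hmain : (fun n => R n * T n) =o[atTop] R := by
    simpa only [mul_one] using (Asymptotics.isBigO_refl R atTop).mul_isLittleO hT
  have hconst : (fun _ => R 0 * l) =o[atTop] R :=
    Asymptotics.isLittleO_const_left.2 (Or.inr (tendsto_norm_atTop_atTop.comp hRtop))
  refine ((hmain.add hconst).sub hsum).congr_left fun n => ?_
  exact (sum_range_succ_eq_of_sum_div (fun n => (hpos n).ne') l n).symm

end SeriesLemmas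

section MartingaleDifferences

variable {Ω : Type*} {m0 : MeasurableSpace Ω} {μ : Measure Ω} {r : ℝ}

lemma memLp_ofReal_iff_integrable_abs_rpow {X : Ω → ℝ} (hX : AEStronglyMeasurable X μ)
    (hr : 0 < r) : MemLp X (ENNReal.ofReal r) μ ↔ Integrable (fun ω => |X ω| ^ r) μ := by
  rw [← integrable_norm_rpow_iff hX (ENNReal.ofReal_pos.2 hr).ne' ENNReal.ofReal_ne_top,
    ENNReal.toReal_ofReal hr.le]
  rfl

lemma integrable_abs_rpow_of_memLp {X : Ω → ℝ} (hr : 0 < r) (hX : MemLp X (ENNReal.ofReal r) μ) :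
    Integrable (fun ω => |X ω| ^ r) μ :=
  (memLp_ofReal_iff_integrable_abs_rpow hX.1 hr).1 hX

lemma integrable_of_memLp_ofReal [IsFiniteMeasure μ] {X : Ω → ℝ} (hr : 1 ≤ r)
    (hX : MemLp X (ENNReal.ofReal r) μ) : Integrable X μ :=
  hX.integrable (ENNReal.one_le_ofReal.2 hr)

lemma stronglyMeasurable_abs_rpow {_ : MeasurableSpace Ω} {X : Ω → ℝ} (hX : StronglyMeasurable X)
    (r : ℝ) : StronglyMeasurable fun ω => |X ω| ^ r :=
  ((measurable_norm.comp hX.measurable).pow_const r).stronglyMeasurable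

lemma abs_abs_rpow_rpow (x s t : ℝ) : |(|x| ^ s)| ^ t = |x| ^ (s * t) := by
  rw [abs_of_nonneg (by positivity), ← Real.rpow_mul (abs_nonneg x)]

lemma rpow_sub_one_mul_le_add {x y : ℝ} (hr : 1 ≤ r) (hx : 0 ≤ x) (hy : 0 ≤ y) :
    x ^ (r - 1) * y ≤ x ^ r + y ^ r := by
  have : 0 ≤ r - 1 := by linarith
  have hr0 : r ≠ 0 := by linarith
  calc x ^ (r - 1) * y ≤ max x y ^ (r - 1) * max x y := by
        gcongr
        · exact le_max_left _ _
        · exact le_max_right _ _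
    _ = max x y ^ r := rpow_sub_one_mul_self (le_max_of_le_left hx) hr0
    _ ≤ x ^ r + y ^ r := by
        rcases max_choice x y with h | h <;> rw [h] <;>
          linarith [Real.rpow_nonneg hx r, Real.rpow_nonneg hy r]

lemma integral_abs_add_rpow_le [IsFiniteMeasure μ] {C : ℝ} (hr : 1 < r)
    (hC : ∀ x y : ℝ, |x + y| ^ r ≤ |x| ^ r + r * (|x| ^ (r - 2) * x) * y + C * |y| ^ r)
    {m : MeasurableSpace Ω} (hm : m ≤ m0) {X D : Ω → ℝ} (hXm : StronglyMeasurable[m] X)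
    (hX : MemLp X (ENNReal.ofReal r) μ) (hD : MemLp D (ENNReal.ofReal r) μ)
    (hD0 : μ[D | m] =ᵐ[μ] 0) :
    ∫ ω, |X ω + D ω| ^ r ∂μ ≤ ∫ ω, |X ω| ^ r ∂μ + C * ∫ ω, |D ω| ^ r ∂μ := by
  have hr0 : 0 < r := by linarith
  have hXi := integrable_abs_rpow_of_memLp hr0 hX
  have hDi := integrable_abs_rpow_of_memLp hr0 hD
  set ψ : Ω → ℝ := fun ω => r * (|X ω| ^ (r - 2) * X ω) with hψ
  have hψm : StronglyMeasurable[m] ψ :=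
    ((stronglyMeasurable_abs_rpow hXm (r - 2)).mul hXm).const_mul r
  have hψD : Integrable (ψ * D) μ := by
    refine ((hXi.add hDi).const_mul r).mono' ((hψm.mono hm).aestronglyMeasurable.mul hD.1)
      (Eventually.of_forall fun ω => ?_)
    have hpow : |X ω| ^ (r - 2) * |X ω| = |X ω| ^ (r - 1) := by
      rw [← rpow_sub_one_mul_self (abs_nonneg (X ω)) (by linarith : r - 1 ≠ 0)]
      ring_nf
    calc ‖(ψ * D) ω‖ = r * (|X ω| ^ (r - 1) * |D ω|) := by
          rw [← hpow, Pi.mul_apply, hψ, norm_mul, norm_mul, norm_mul,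
            Real.norm_of_nonneg hr0.le, Real.norm_of_nonneg (by positivity), Real.norm_eq_abs,
            Real.norm_eq_abs]
          ring
      _ ≤ r * (|X ω| ^ r + |D ω| ^ r) := by
          gcongr
          exact rpow_sub_one_mul_le_add hr.le (abs_nonneg _) (abs_nonneg _)
  have hψD0 : ∫ ω, (ψ * D) ω ∂μ = 0 := by
    have hpull := condExp_mul_of_stronglyMeasurable_left hψm hψD
      (integrable_of_memLp_ofReal hr.le hD)
    rw [← integral_condExp hm, integral_eq_zero_of_ae]
    filter_upwards [hpull, hD0] with ω h h0
    rw [h, Pi.mul_apply, h0, Pi.zero_apply, mul_zero]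
  calc ∫ ω, |X ω + D ω| ^ r ∂μ ≤ ∫ ω, (|X ω| ^ r + (ψ * D) ω + C * |D ω| ^ r) ∂μ :=
        integral_mono (integrable_abs_rpow_of_memLp hr0 (hX.add hD))
          ((hXi.add hψD).add (hDi.const_mul C)) fun ω => hC (X ω) (D ω)
    _ = ∫ ω, |X ω| ^ r ∂μ + C * ∫ ω, |D ω| ^ r ∂μ := by
        refine (integral_add (hXi.add hψD) (hDi.const_mul C)).trans ?_
        rw [integral_add' hXi hψD, hψD0, integral_const_mul, add_zero]

lemma ae_exists_tendsto_sum_of_sum_integral_rpow_le [IsFiniteMeasure μ] {F : Filtration ℕ m0}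
    (hr : 1 < r) (hr2 : r ≤ 2) {D : ℕ → Ω → ℝ} (hDm : ∀ k, StronglyMeasurable[F (k + 1)] (D k))
    (hD : ∀ k, MemLp (D k) (ENNReal.ofReal r) μ) (hD0 : ∀ k, μ[D k | F k] =ᵐ[μ] 0) {B : ℝ}
    (hB : ∀ n, ∑ k ∈ range n, ∫ ω, |D k ω| ^ r ∂μ ≤ B) :
    ∀ᵐ ω ∂μ, ∃ l : ℝ, Tendsto (fun n => ∑ k ∈ range n, D k ω) atTop (𝓝 l) := by
  obtain ⟨C, hC, hCr⟩ := exists_abs_add_rpow_le hr.le hr2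
  have hr0 : 0 < r := by linarith
  set X : ℕ → Ω → ℝ := fun n ω => ∑ k ∈ range n, D k ω with hX
  have hX_succ : ∀ n, X (n + 1) = X n + D n := fun n => funext fun ω => sum_range_succ _ _
  have hXm : ∀ n, StronglyMeasurable[F n] (X n) := fun n =>
    Finset.stronglyMeasurable_fun_sum _ fun k hk =>
      (hDm k).mono (F.mono (Nat.succ_le_of_lt (mem_range.1 hk)))
  have hXLr : ∀ n, MemLp (X n) (ENNReal.ofReal r) μ := fun n => memLp_finsetSum _ fun k _ => hD k
  have hXint : ∀ n, Integrable (X n) μ := fun n => integrable_of_memLp_ofReal hr.le (hXLr n)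
  have hmoment : ∀ n, ∫ ω, |X n ω| ^ r ∂μ ≤ C * ∑ k ∈ range n, ∫ ω, |D k ω| ^ r ∂μ := fun n => by
    induction n with
    | zero => simp [hX, Real.zero_rpow hr0.ne']
    | succ n ih =>
      rw [hX_succ, sum_range_succ, mul_add]
      have := integral_abs_add_rpow_le hr hCr (F.le n) (hXm n) (hXLr n) (hD n) (hD0 n)
      exact this.trans (by gcongr)
  have hmart : Martingale X F μ := by
    refine martingale_nat hXm hXint fun n => ?_
    have hadd := condExp_add (hXint n) (integrable_of_memLp_ofReal hr.le (hD n)) (F n)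
    rw [hX_succ]
    filter_upwards [hadd, hD0 n] with ω h h0
    rw [h, Pi.add_apply, h0, condExp_of_stronglyMeasurable (F.le n) (hXm n) (hXint n),
      Pi.zero_apply, add_zero]
  refine hmart.submartingale.exists_ae_tendsto_of_bdd (R := (μ.real Set.univ + C * B).toNNReal)
    fun n => ?_
  rw [eLpNorm_one_eq_lintegral_enorm, ← ofReal_integral_norm_eq_lintegral_enorm (hXint n)]
  refine ENNReal.ofReal_le_ofReal ?_
  have hXr := integrable_abs_rpow_of_memLp hr0 (hXLr n)
  calc ∫ ω, ‖X n ω‖ ∂μ ≤ ∫ ω, (1 + |X n ω| ^ r) ∂μ :=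
        integral_mono (hXint n).norm ((integrable_const 1).add hXr)
          fun ω => by
            simpa using rpow_le_one_add_rpow (abs_nonneg (X n ω)) zero_le_one hr.le
    _ = μ.real Set.univ + ∫ ω, |X n ω| ^ r ∂μ := by
        rw [integral_add (integrable_const _) hXr, integral_const, smul_eq_mul, mul_one]
    _ ≤ μ.real Set.univ + C * B := by
        gcongr
        exact (hmoment n).trans (by gcongr; exact hB n)

lemma abs_sub_rpow_le (hr : 0 ≤ r) (x y : ℝ) : |x - y| ^ r ≤ 2 ^ r * (|x| ^ r + |y| ^ r) := by
  have hsub : |x - y| ≤ 2 * max |x| |y| := by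
    linarith [abs_sub x y, le_max_left |x| |y|, le_max_right |x| |y|]
  calc |x - y| ^ r ≤ (2 * max |x| |y|) ^ r := by gcongr
    _ = 2 ^ r * max |x| |y| ^ r := Real.mul_rpow (by norm_num) (by positivity)
    _ ≤ 2 ^ r * (|x| ^ r + |y| ^ r) := by
      gcongr
      rcases max_choice |x| |y| with h | h <;> rw [h]
      · exact le_add_of_nonneg_right (by positivity)
      · exact le_add_of_nonneg_left (by positivity)

lemma condExp_abs_sub_condExp_rpow_le [IsFiniteMeasure μ] (hr : 1 ≤ r) {m : MeasurableSpace Ω}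
    (hm : m ≤ m0) {X : Ω → ℝ} (hX : MemLp X (ENNReal.ofReal r) μ) :
    ∀ᵐ ω ∂μ, (μ[fun ω => |X ω - (μ[X | m]) ω| ^ r | m]) ω ≤
      2 ^ r * (2 * (μ[fun ω => |X ω| ^ r | m]) ω) := by
  have hr0 : 0 < r := by linarith
  have hmean : MemLp (μ[X | m]) (ENNReal.ofReal r) μ := hX.condExp (ENNReal.one_le_ofReal.2 hr)
  have hXi := integrable_abs_rpow_of_memLp hr0 hX
  have hmi := integrable_abs_rpow_of_memLp hr0 hmean
  have hjensen := Integrable.norm_condExp_rpow_le (m := m) (f := X) hr hXi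
  have hself := condExp_of_stronglyMeasurable hm
    (stronglyMeasurable_abs_rpow (stronglyMeasurable_condExp (f := X)) r) hmi
  have hdiff : Integrable (fun ω => |X ω - (μ[X | m]) ω| ^ r) μ :=
    integrable_abs_rpow_of_memLp hr0 (hX.sub hmean)
  generalize μ[X | m] = Y at *
  have hmono : μ[fun ω => |X ω - Y ω| ^ r | m] ≤ᵐ[μ]
      μ[(2 : ℝ) ^ r • ((fun ω => |X ω| ^ r) + fun ω => |Y ω| ^ r) | m] :=
    condExp_mono hdiff ((hXi.add hmi).smul _)
      (Eventually.of_forall fun ω => abs_sub_rpow_le hr0.le _ _)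
  have hsmul := condExp_smul (μ := μ) ((2 : ℝ) ^ r)
    ((fun ω => |X ω| ^ r) + fun ω => |Y ω| ^ r) m
  filter_upwards [hmono, hsmul, condExp_add hXi hmi m, hjensen] with ω hle hω hadd hjensen
  rw [hω, Pi.smul_apply, hadd, Pi.add_apply, hself, smul_eq_mul] at hle
  refine hle.trans ?_
  rw [two_mul]
  gcongr
  exact hjensen

/-- A sequence of martingale increments, `ξ k` being the increment from time `k` to time `k + 1`,
whose conditional moments of order `r` are almost surely bounded along the sequence. -/
structure LrMartingaleDifference (F : Filtration ℕ m0) (μ : Measure Ω) (r : ℝ) (ξ : ℕ → Ω → ℝ) :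
    Prop where
  stronglyMeasurable : ∀ k, StronglyMeasurable[F (k + 1)] (ξ k)
  memLp : ∀ k, MemLp (ξ k) (ENNReal.ofReal r) μ
  condExp_eq_zero : ∀ k, μ[ξ k | F k] =ᵐ[μ] 0
  condExp_rpow_bounded : ∀ᵐ ω ∂μ, ∃ C : ℝ, ∀ k, (μ[fun ω => |ξ k ω| ^ r | F k]) ω ≤ C

namespace LrMartingaleDifference

variable {F : Filtration ℕ m0} {ξ : ℕ → Ω → ℝ}

lemma memLp_bounded_mul (hξ : LrMartingaleDifference F μ r ξ) (hr : 0 < r) {z : Ω → ℝ} {k : ℕ}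
    (hz : StronglyMeasurable[F k] z) {K : ℝ} (hzK : ∀ ω, |z ω| ^ r ≤ K) :
    MemLp (z * ξ k) (ENNReal.ofReal r) μ := by
  have hzm : StronglyMeasurable z := hz.mono (F.le k)
  rw [memLp_ofReal_iff_integrable_abs_rpow (hzm.aestronglyMeasurable.mul (hξ.memLp k).1) hr]
  simp only [Pi.mul_apply, abs_mul, Real.mul_rpow (abs_nonneg _) (abs_nonneg _)]
  refine (integrable_abs_rpow_of_memLp hr (hξ.memLp k)).bdd_mul
    (stronglyMeasurable_abs_rpow hzm r).aestronglyMeasurable (c := K)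
    (Eventually.of_forall fun ω => ?_)
  rw [Real.norm_of_nonneg (by positivity)]
  exact hzK ω

variable [IsFiniteMeasure μ]

lemma condExp_mul_eq_zero (hξ : LrMartingaleDifference F μ r ξ) (hr : 1 ≤ r) {z : Ω → ℝ} {k : ℕ}
    (hz : StronglyMeasurable[F k] z) (hzξ : MemLp (z * ξ k) (ENNReal.ofReal r) μ) :
    μ[z * ξ k | F k] =ᵐ[μ] 0 := by
  filter_upwards [condExp_mul_of_stronglyMeasurable_left hz (integrable_of_memLp_ofReal hr hzξ)
    (integrable_of_memLp_ofReal hr (hξ.memLp k)), hξ.condExp_eq_zero k] with ω h h0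
  rw [h, Pi.mul_apply, h0, Pi.zero_apply, mul_zero]

lemma integral_abs_mul_rpow (hξ : LrMartingaleDifference F μ r ξ) (hr : 0 < r) {z : Ω → ℝ} {k : ℕ}
    (hz : StronglyMeasurable[F k] z) (hzξ : MemLp (z * ξ k) (ENNReal.ofReal r) μ) :
    Integrable (fun ω => |z ω| ^ r * (μ[fun ω => |ξ k ω| ^ r | F k]) ω) μ ∧
      ∫ ω, |z ω * ξ k ω| ^ r ∂μ = ∫ ω, |z ω| ^ r * (μ[fun ω => |ξ k ω| ^ r | F k]) ω ∂μ := by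
  have hint := integrable_abs_rpow_of_memLp hr hzξ
  simp only [Pi.mul_apply, abs_mul, Real.mul_rpow (abs_nonneg _) (abs_nonneg _)] at hint ⊢
  have hpull := condExp_mul_of_stronglyMeasurable_left (stronglyMeasurable_abs_rpow hz r) hint
    (integrable_abs_rpow_of_memLp hr (hξ.memLp k))
  refine ⟨integrable_condExp.congr hpull, ?_⟩
  rw [← integral_condExp (F.le k)]
  exact integral_congr_ae hpull

lemma ae_exists_tendsto_sum_mul_of_bounded (hξ : LrMartingaleDifference F μ r ξ) (hr : 1 < r)
    (hr2 : r ≤ 2) {z : ℕ → Ω → ℝ} (hz : StronglyAdapted F z) {K : ℝ}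
    (hK : ∀ n ω, ∑ k ∈ range n,
      |z k ω| ^ r * (1 + |(μ[fun ω => |ξ k ω| ^ r | F k]) ω|) ≤ K) :
    ∀ᵐ ω ∂μ, ∃ l : ℝ, Tendsto (fun n => ∑ k ∈ range n, z k ω * ξ k ω) atTop (𝓝 l) := by
  have hr0 : 0 < r := by linarith
  set v : ℕ → Ω → ℝ := fun k => μ[fun ω => |ξ k ω| ^ r | F k]
  have hzK : ∀ k ω, |z k ω| ^ r ≤ K := fun k ω => by
    refine le_trans ?_ (hK (k + 1) ω)
    refine le_trans ?_ (single_le_sum (f := fun k => |z k ω| ^ r * (1 + |v k ω|))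
      (fun i _ => by positivity) (self_mem_range_succ k))
    exact le_mul_of_one_le_right (by positivity) (le_add_of_nonneg_right (abs_nonneg _))
  have hzξ : ∀ k, MemLp (z k * ξ k) (ENNReal.ofReal r) μ := fun k =>
    hξ.memLp_bounded_mul hr0 (hz k) (hzK k)
  refine ae_exists_tendsto_sum_of_sum_integral_rpow_le (D := fun k => z k * ξ k)
    (B := K * μ.real Set.univ) hr hr2
    (fun k => ((hz k).mono (F.mono k.le_succ)).mul (hξ.stronglyMeasurable k)) hzξ
    (fun k => hξ.condExp_mul_eq_zero hr.le (hz k) (hzξ k)) fun n => ?_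
  have hmoment := fun k => hξ.integral_abs_mul_rpow hr0 (hz k) (hzξ k)
  calc ∑ k ∈ range n, ∫ ω, |(z k * ξ k) ω| ^ r ∂μ
      = ∑ k ∈ range n, ∫ ω, |z k ω| ^ r * v k ω ∂μ := sum_congr rfl fun k _ => (hmoment k).2
    _ = ∫ ω, ∑ k ∈ range n, |z k ω| ^ r * v k ω ∂μ :=
        (integral_finsetSum _ fun k _ => (hmoment k).1).symm
    _ ≤ ∫ _, K ∂μ := by
        refine integral_mono (integrable_finsetSum _ fun k _ => (hmoment k).1)
          (integrable_const K) fun ω => ?_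
        refine (sum_le_sum fun k _ => ?_).trans (hK n ω)
        gcongr
        linarith [le_abs_self (v k ω)]
    _ = K * μ.real Set.univ := by rw [integral_const, smul_eq_mul, mul_comm]

lemma ae_exists_tendsto_sum_mul_of_le (hξ : LrMartingaleDifference F μ r ξ) (hr : 1 < r)
    (hr2 : r ≤ 2) {z : ℕ → Ω → ℝ} (hz : StronglyAdapted F z) (K : ℝ) (hK : 0 ≤ K) :
    ∀ᵐ ω ∂μ, (∀ n, ∑ k ∈ range (n + 1),
        |z k ω| ^ r * (1 + |(μ[fun ω => |ξ k ω| ^ r | F k]) ω|) ≤ K) →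
      ∃ l : ℝ, Tendsto (fun n => ∑ k ∈ range n, z k ω * ξ k ω) atTop (𝓝 l) := by
  have hr0 : r ≠ 0 := by linarith
  set v : ℕ → Ω → ℝ := fun k => μ[fun ω => |ξ k ω| ^ r | F k]
  set w : ℕ → Ω → ℝ := fun k ω => |z k ω| ^ r * (1 + |v k ω|)
  have hvm : StronglyAdapted F v := fun _ => stronglyMeasurable_condExp
  have hwm : StronglyAdapted F w := fun k =>
    (stronglyMeasurable_abs_rpow (hz k) r).mul (stronglyMeasurable_const.add (hvm k).norm)
  set E : ℕ → Set Ω := fun k => {ω | ∑ j ∈ range (k + 1), w j ω ≤ K}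
  have hEm : ∀ k, MeasurableSet[F k] (E k) := fun k =>
    (Finset.stronglyMeasurable_fun_sum _ fun j hj =>
      hwm.stronglyMeasurable_le (mem_range_succ_iff.1 hj)).measurableSet_le
        stronglyMeasurable_const
  have hbound : ∀ n ω, ∑ k ∈ range n, |(E k).indicator (z k) ω| ^ r * (1 + |v k ω|) ≤ K :=
    fun n ω => by
    induction n with
    | zero => simpa
    | succ n ih =>
      by_cases hω : ω ∈ E n
      · have hωw : ∑ k ∈ range (n + 1), w k ω ≤ K := hω
        refine (sum_le_sum fun k _ => ?_).trans hωw
        refine mul_le_mul_of_nonneg_right ?_ (by positivity)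
        refine Real.rpow_le_rpow (abs_nonneg _) ?_ (by linarith)
        exact norm_indicator_le_norm_self (z k) ω
      · rwa [sum_range_succ, Set.indicator_of_notMem hω, abs_zero, Real.zero_rpow hr0, zero_mul,
          add_zero]
  filter_upwards [hξ.ae_exists_tendsto_sum_mul_of_bounded hr hr2
    (fun k => (hz k).indicator (hEm k)) hbound] with ω hω hωK
  simpa only [Set.indicator_of_mem (show ω ∈ E _ from hωK _)] using hω

lemma ae_exists_tendsto_sum_mul (hξ : LrMartingaleDifference F μ r ξ) (hr : 1 < r) (hr2 : r ≤ 2)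
    {z : ℕ → Ω → ℝ} (hz : StronglyAdapted F z)
    (hzsum : ∀ᵐ ω ∂μ, Summable fun k => |z k ω| ^ r) :
    ∀ᵐ ω ∂μ, ∃ l : ℝ, Tendsto (fun n => ∑ k ∈ range n, z k ω * ξ k ω) atTop (𝓝 l) := by
  have htrunc := ae_all_iff.2 fun K : ℕ =>
    hξ.ae_exists_tendsto_sum_mul_of_le hr hr2 hz K K.cast_nonneg
  have hv0 : ∀ᵐ ω ∂μ, ∀ k, 0 ≤ (μ[fun ω => |ξ k ω| ^ r | F k]) ω :=
    ae_all_iff.2 fun k => condExp_nonneg (Eventually.of_forall fun ω => by positivity)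
  filter_upwards [htrunc, hξ.condExp_rpow_bounded, hzsum, hv0] with ω hω ⟨C, hC⟩ hsum hv
  obtain ⟨K, hK⟩ := exists_nat_ge ((∑' k, |z k ω| ^ r) * (1 + C))
  refine hω K fun n => le_trans ?_ hK
  have hC0 : 0 ≤ C := (hv 0).trans (hC 0)
  calc ∑ k ∈ range (n + 1), |z k ω| ^ r * (1 + |(μ[fun ω => |ξ k ω| ^ r | F k]) ω|)
      ≤ ∑ k ∈ range (n + 1), |z k ω| ^ r * (1 + C) := by
        gcongr with k
        rw [abs_of_nonneg (hv k)]
        exact hC k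
    _ = (∑ k ∈ range (n + 1), |z k ω| ^ r) * (1 + C) := (sum_mul _ _ _).symm
    _ ≤ _ := by
        gcongr
        exact hsum.sum_le_tsum _ fun k _ => by positivity

lemma ae_isLittleO_sum_mul (hξ : LrMartingaleDifference F μ r ξ) (hr : 1 < r) (hr2 : r ≤ 2)
    {y R : ℕ → Ω → ℝ} (hy : StronglyAdapted F y)
    (hR : StronglyAdapted F R) (hRpos : ∀ k ω, 0 < R k ω)
    (hRmono : ∀ ω, Monotone fun k => R k ω)
    (hRtop : ∀ᵐ ω ∂μ, Tendsto (fun k => R k ω) atTop atTop)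
    (hsum : ∀ᵐ ω ∂μ, Summable fun k => |y k ω / R k ω| ^ r) :
    ∀ᵐ ω ∂μ, (fun n => ∑ k ∈ range (n + 1), y k ω * ξ k ω) =o[atTop] fun n => R n ω := by
  filter_upwards [hξ.ae_exists_tendsto_sum_mul hr hr2
    (fun k => ((hy k).measurable.div (hR k).measurable).stronglyMeasurable) hsum, hRtop]
    with ω ⟨l, hl⟩ htop
  refine isLittleO_sum_of_tendsto_sum_div (hRmono ω) (fun n => hRpos n ω) htop (l := l)
    (hl.congr fun n => sum_congr rfl fun k _ => div_mul_eq_mul_div _ _ _)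

lemma of_centering {ζ : ℕ → Ω → ℝ} (hr : 1 ≤ r) (hζm : ∀ k, StronglyMeasurable[F (k + 1)] (ζ k))
    (hζ : ∀ k, MemLp (ζ k) (ENNReal.ofReal r) μ)
    (hζb : ∀ᵐ ω ∂μ, ∃ C : ℝ, ∀ k, (μ[fun ω => |ζ k ω| ^ r | F k]) ω ≤ C) :
    LrMartingaleDifference F μ r fun k => ζ k - μ[ζ k | F k] := by
  have hint := fun k => integrable_of_memLp_ofReal hr (hζ k)
  refine ⟨fun k => (hζm k).sub (stronglyMeasurable_condExp.mono (F.mono k.le_succ)),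
    fun k => (hζ k).sub ((hζ k).condExp (ENNReal.one_le_ofReal.2 hr)), fun k => ?_, ?_⟩
  · filter_upwards [condExp_sub (hint k) integrable_condExp (F k)] with ω h
    rw [h, Pi.sub_apply, condExp_of_stronglyMeasurable (F.le k) stronglyMeasurable_condExp
      integrable_condExp, sub_self, Pi.zero_apply]
  · filter_upwards [ae_all_iff.2 fun k => condExp_abs_sub_condExp_rpow_le hr (F.le k) (hζ k), hζb]
      with ω hω ⟨C, hC⟩
    exact ⟨2 ^ r * (2 * C), fun k => (hω k).trans (by gcongr; exact hC k)⟩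

lemma mono_exponent (hξ : LrMartingaleDifference F μ r ξ) {s : ℝ} (hs : 0 < s) (hsr : s ≤ r) :
    LrMartingaleDifference F μ s ξ := by
  have hLs : ∀ k, MemLp (ξ k) (ENNReal.ofReal s) μ := fun k =>
    (hξ.memLp k).mono_exponent (ENNReal.ofReal_le_ofReal hsr)
  refine ⟨hξ.stronglyMeasurable, hLs, hξ.condExp_eq_zero, ?_⟩
  have hle : ∀ k, ∀ᵐ ω ∂μ, (μ[fun ω => |ξ k ω| ^ s | F k]) ω ≤
      1 + (μ[fun ω => |ξ k ω| ^ r | F k]) ω := fun k => by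
    have hri := integrable_abs_rpow_of_memLp (hs.trans_le hsr) (hξ.memLp k)
    have hmono : μ[fun ω => |ξ k ω| ^ s | F k] ≤ᵐ[μ]
        μ[(fun _ => (1 : ℝ)) + fun ω => |ξ k ω| ^ r | F k] :=
      condExp_mono (integrable_abs_rpow_of_memLp hs (hLs k)) ((integrable_const _).add hri)
        (Eventually.of_forall fun ω => rpow_le_one_add_rpow (abs_nonneg _) hs.le hsr)
    filter_upwards [hmono, condExp_add (integrable_const (1 : ℝ)) hri (F k)] with ω h hadd
    rwa [hadd, Pi.add_apply, condExp_const (F.le k)] at h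
  filter_upwards [hξ.condExp_rpow_bounded, ae_all_iff.2 hle] with ω ⟨C, hC⟩ hω
  exact ⟨1 + C, fun k => (hω k).trans (by gcongr; exact hC k)⟩

lemma abs_rpow_sub_condExp (hξ : LrMartingaleDifference F μ r ξ) {s t : ℝ} (hs : 0 < s)
    (ht : 1 ≤ t) (hst : s * t ≤ r) :
    LrMartingaleDifference F μ t
      fun k => (fun ω => |ξ k ω| ^ s) - μ[fun ω => |ξ k ω| ^ s | F k] := by
  have ht0 : 0 < t := by linarith
  have hξ' := hξ.mono_exponent (mul_pos hs ht0) hst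
  have hm : ∀ k, StronglyMeasurable[F (k + 1)] fun ω => |ξ k ω| ^ s := fun k =>
    stronglyMeasurable_abs_rpow (hξ.stronglyMeasurable k) s
  refine of_centering ht hm (fun k => ?_) ?_
  · rw [memLp_ofReal_iff_integrable_abs_rpow ((hm k).mono (F.le _)).aestronglyMeasurable ht0]
    simp only [abs_abs_rpow_rpow]
    exact integrable_abs_rpow_of_memLp (mul_pos hs ht0) (hξ'.memLp k)
  · simp only [abs_abs_rpow_rpow]
    exact hξ'.condExp_rpow_bounded

end LrMartingaleDifference

end MartingaleDifferences
section ContractiveRecursions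

/-- The normalization `R n = 1 + ∑_{k ≤ n} γ k (1 + W k ^ q) + max_{k ≤ n} W k ^ q`: it is monotone,
it controls both `W n ^ q` and the sum of the `γ k (1 + W k ^ q)`, and only depends on the
values up to time `n`. -/
def momentNormalizer (q : ℝ) (γ W : ℕ → ℝ) (n : ℕ) : ℝ :=
  1 + ∑ k ∈ range (n + 1), γ k * (1 + W k ^ q) + partialSups (fun k => W k ^ q) n

/-- The coefficient of the innovation `e n` in the expansion to first order of `W (n + 1) ^ q`, when
`W (n + 1) = (1 - γ n) * W n + 2 * (e n * x n) + e n ^ 2 * γ n`. -/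
def linearCoeff (q : ℝ) (γ W x : ℕ → ℝ) (n : ℕ) : ℝ :=
  2 * q * ((1 - γ n) * W n) ^ (q - 1) * x n

lemma exists_le_mul_add_of_isLittleO {E R : ℕ → ℝ} (hR : ∀ n, 0 ≤ R n) (h : E =o[atTop] R) {δ : ℝ}
    (hδ : 0 < δ) : ∃ K, 0 ≤ K ∧ ∀ n, E n ≤ δ * R n + K := by
  obtain ⟨N, hN⟩ := eventually_atTop.1 (h.bound hδ)
  refine ⟨∑ k ∈ range N, |E k|, by positivity, fun n => (le_abs_self _).trans ?_⟩
  have hRn := hR n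
  rcases lt_or_ge n N with hn | hn
  · have := single_le_sum (f := fun k => |E k|) (fun _ _ => abs_nonneg _) (mem_range.2 hn)
    exact this.trans (le_add_of_nonneg_left (by positivity))
  · have := hN n hn
    rw [Real.norm_eq_abs, Real.norm_of_nonneg hRn] at this
    exact this.trans (le_add_of_nonneg_right (by positivity))

section Normalizer

variable {q : ℝ} {γ W : ℕ → ℝ} (hγ : ∀ n, 0 ≤ γ n) (hW : ∀ n, 0 ≤ W n)
include hW

lemma partialSups_rpow_nonneg (n : ℕ) : 0 ≤ partialSups (fun k => W k ^ q) n :=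
  (Real.rpow_nonneg (hW n) q).trans (le_partialSups (fun k => W k ^ q) n)

lemma one_add_sum_le_momentNormalizer (n : ℕ) :
    1 + ∑ k ∈ range (n + 1), γ k * (1 + W k ^ q) ≤ momentNormalizer q γ W n :=
  le_add_of_nonneg_right (partialSups_rpow_nonneg hW n)

include hγ

lemma mul_one_add_rpow_nonneg (n : ℕ) : 0 ≤ γ n * (1 + W n ^ q) :=
  mul_nonneg (hγ n) (add_nonneg zero_le_one (Real.rpow_nonneg (hW n) q))

lemma one_add_sum_step_le_momentNormalizer (n : ℕ) :
    1 + ∑ k ∈ range (n + 1), γ k ≤ momentNormalizer q γ W n := by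
  refine le_trans ?_ (one_add_sum_le_momentNormalizer hW n)
  gcongr with k
  exact le_mul_of_one_le_right (hγ k) (le_add_of_nonneg_right (Real.rpow_nonneg (hW k) q))

lemma momentNormalizer_pos (n : ℕ) : 0 < momentNormalizer q γ W n :=
  lt_of_lt_of_le (by have := sum_nonneg fun k (_ : k ∈ range (n + 1)) => hγ k; linarith)
    (one_add_sum_step_le_momentNormalizer hγ hW n)

lemma rpow_le_momentNormalizer {k n : ℕ} (hkn : k ≤ n) : W k ^ q ≤ momentNormalizer q γ W n := by
  have hsum := sum_nonneg fun k (_ : k ∈ range (n + 1)) => mul_one_add_rpow_nonneg (q := q) hγ hW k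
  have hmax := le_partialSups_of_le (fun k => W k ^ q) hkn
  exact hmax.trans (le_add_of_nonneg_left (by linarith))

lemma monotone_momentNormalizer : Monotone (momentNormalizer q γ W) := by
  refine Monotone.add (monotone_const.add (monotone_nat_of_le_succ fun n => ?_))
    (partialSups fun k => W k ^ q).monotone
  rw [sum_range_succ _ (n + 1)]
  exact le_add_of_nonneg_right (mul_one_add_rpow_nonneg hγ hW _)

lemma summable_step_div_momentNormalizer_rpow {s : ℝ} (hs : 1 < s) :
    Summable fun n => γ n * (1 + W n ^ q) / momentNormalizer q γ W n ^ s :=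
  summable_div_rpow_of_sum_le hs (mul_one_add_rpow_nonneg hγ hW)
    (one_add_sum_le_momentNormalizer hW)

lemma summable_div_momentNormalizer_rpow {r C : ℝ} (hr : 1 < r) {y : ℕ → ℝ}
    (hy : ∀ n, |y n| ^ r ≤ C * (γ n * (1 + W n ^ q))) :
    Summable fun n => |y n / momentNormalizer q γ W n| ^ r := by
  refine Summable.of_nonneg_of_le (fun n => by positivity) (fun n => ?_)
    ((summable_step_div_momentNormalizer_rpow (q := q) hγ hW hr).mul_left C)
  have hR := momentNormalizer_pos (q := q) hγ hW n
  rw [abs_div, abs_of_pos hR, Real.div_rpow (abs_nonneg _) hR.le, ← mul_div_assoc]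
  gcongr
  exact hy n

lemma sq_linearCoeff_le (hq : 1 ≤ q) {x : ℕ → ℝ} {n : ℕ} (hγ1 : γ n ≤ 1)
    (hx : x n ^ 2 ≤ (1 - γ n) * W n * γ n) :
    linearCoeff q γ W x n ^ 2 ≤
      4 * q ^ 2 * (γ n * (1 + W n ^ q)) * momentNormalizer q γ W n ^ (1 - 1 / q) := by
  have hγn := hγ n
  have hWn := hW n
  have : 0 ≤ (1 - γ n) * W n := mul_nonneg (by linarith) hWn
  have hAW : (1 - γ n) * W n ≤ W n := mul_le_of_le_one_left hWn (by linarith)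
  have hq0 : q ≠ 0 := by linarith
  have hq1 : 0 ≤ 1 - 1 / q := by
    rw [sub_nonneg, div_le_one (by linarith)]
    exact hq
  have hpow : W n ^ (q - 1) ≤ momentNormalizer q γ W n ^ (1 - 1 / q) :=
    calc W n ^ (q - 1) = (W n ^ q) ^ (1 - 1 / q) := by
          rw [← Real.rpow_mul hWn, mul_one_sub, mul_one_div_cancel hq0]
      _ ≤ _ := by
          gcongr
          exact rpow_le_momentNormalizer hγ hW le_rfl
  calc linearCoeff q γ W x n ^ 2
      = 4 * q ^ 2 * ((((1 - γ n) * W n) ^ (q - 1)) ^ 2 * x n ^ 2) := by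
        rw [linearCoeff]
        ring
    _ ≤ 4 * q ^ 2 * ((W n ^ (q - 1)) ^ 2 * (W n * γ n)) := by
        gcongr
        exact hx.trans (by gcongr)
    _ = 4 * q ^ 2 * (γ n * (W n ^ (q - 1) * W n)) * W n ^ (q - 1) := by ring
    _ = 4 * q ^ 2 * (γ n * W n ^ q) * W n ^ (q - 1) := by rw [rpow_sub_one_mul_self hWn hq0]
    _ ≤ _ := by
        gcongr
        linarith

lemma summable_linearCoeff_div_momentNormalizer (hq : 1 ≤ q) {x : ℕ → ℝ} (hγ1 : ∀ n, γ n ≤ 1)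
    (hx : ∀ n, x n ^ 2 ≤ (1 - γ n) * W n * γ n) :
    Summable fun n => |linearCoeff q γ W x n / momentNormalizer q γ W n| ^ (2 : ℝ) := by
  have hs : 1 < 1 + 1 / q := by
    have : 0 < q := by linarith
    simpa
  refine Summable.of_nonneg_of_le (fun n => by positivity) (fun n => ?_)
    ((summable_step_div_momentNormalizer_rpow (q := q) hγ hW hs).mul_left (4 * q ^ 2))
  have hR := momentNormalizer_pos (q := q) hγ hW n
  have hsq := sq_linearCoeff_le hγ hW hq (hγ1 n) (hx n)
  set R := momentNormalizer q γ W n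
  have hsplit : R ^ 2 = R ^ (1 - 1 / q) * R ^ (1 + 1 / q) := by
    rw [← Real.rpow_add hR, ← Real.rpow_two]
    ring_nf
  calc |linearCoeff q γ W x n / R| ^ (2 : ℝ) = linearCoeff q γ W x n ^ 2 / R ^ 2 := by
        rw [Real.rpow_two, sq_abs, div_pow]
    _ ≤ 4 * q ^ 2 * (γ n * (1 + W n ^ q)) * R ^ (1 - 1 / q) / R ^ 2 := by gcongr
    _ = 4 * q ^ 2 * (γ n * (1 + W n ^ q) / R ^ (1 + 1 / q)) := by
        rw [hsplit]
        field_simp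

lemma momentNormalizer_le_of_rpow_succ_le {K : ℝ} (hK : W 0 ^ q ≤ K)
    (h : ∀ n, W (n + 1) ^ q + 1 / 2 * ∑ k ∈ range (n + 1), γ k * W k ^ q ≤
      1 / 6 * momentNormalizer q γ W n + K * (1 + ∑ k ∈ range (n + 1), γ k)) (n : ℕ) :
    momentNormalizer q γ W n ≤ (2 + 6 * K) * (1 + ∑ k ∈ range (n + 1), γ k) := by
  set G : ℕ → ℝ := fun n => 1 + ∑ k ∈ range (n + 1), γ k with hG
  have hK0 : 0 ≤ K := (Real.rpow_nonneg (hW 0) q).trans hK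
  have hG1 : ∀ n, 1 ≤ G n := fun n => le_add_of_nonneg_right (sum_nonneg fun k _ => hγ k)
  have hGmono : Monotone G := monotone_const.add (monotone_nat_of_le_succ fun n => by
    rw [sum_range_succ _ (n + 1)]
    exact le_add_of_nonneg_right (hγ _))
  have hsum : ∀ n, 0 ≤ ∑ k ∈ range (n + 1), γ k * W k ^ q := fun n =>
    sum_nonneg fun k _ => mul_nonneg (hγ k) (Real.rpow_nonneg (hW k) q)
  have hmax : partialSups (fun k => W k ^ q) n ≤ 1 / 6 * momentNormalizer q γ W n + K * G n := by
    refine partialSups_le _ _ _ fun k hk => ?_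
    rcases k with _ | k
    · have hR := (momentNormalizer_pos (q := q) hγ hW n).le
      have := le_mul_of_one_le_right hK0 (hG1 n)
      linarith
    · have hkn : k ≤ n := by omega
      calc W (k + 1) ^ q ≤ 1 / 6 * momentNormalizer q γ W k + K * G k := by linarith [h k, hsum k]
        _ ≤ _ := by
          gcongr
          · exact monotone_momentNormalizer hγ hW hkn
          · exact hGmono hkn
  have hsplit : momentNormalizer q γ W n =
      G n + ∑ k ∈ range (n + 1), γ k * W k ^ q + partialSups (fun k => W k ^ q) n := by
    simp only [momentNormalizer, hG, mul_add, mul_one, sum_add_distrib]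
    ring
  linarith [h n, Real.rpow_nonneg (hW (n + 1)) q]

end Normalizer

/-- The recursion `W (n + 1) = (1 - γ n) W n + 2 e n x n + (e n) ^ 2 γ n`, in which the drift
contracts `W` by the factor `1 - γ n` and the cross term is controlled by the Cauchy–Schwarz bound
`x n ^ 2 ≤ (1 - γ n) W n γ n`. -/
structure ContractiveRecursion (γ W x e : ℕ → ℝ) : Prop where
  step_nonneg : ∀ n, 0 ≤ γ n
  step_le_one : ∀ n, γ n ≤ 1
  nonneg : ∀ n, 0 ≤ W n
  sq_le : ∀ n, x n ^ 2 ≤ (1 - γ n) * W n * γ n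
  succ_eq : ∀ n, W (n + 1) = (1 - γ n) * W n + 2 * (e n * x n) + e n ^ 2 * γ n

namespace ContractiveRecursion

variable {γ W x e : ℕ → ℝ} {q : ℝ}

lemma exists_rpow_add_sum_le (h : ContractiveRecursion γ W x e) (hq : 1 ≤ q) :
    ∃ C, 0 ≤ C ∧ ∀ n, W n ^ q + 1 / 2 * ∑ k ∈ range n, γ k * W k ^ q ≤
      W 0 ^ q + ∑ k ∈ range n, linearCoeff q γ W x k * e k +
        C * ∑ k ∈ range n, γ k * |e k| ^ (2 * q) := by
  obtain ⟨C, hC, hstep⟩ := exists_contraction_rpow_le hq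
  refine ⟨C, hC, fun n => ?_⟩
  induction n with
  | zero => simp
  | succ n ih =>
    have := hstep (W n) (γ n) (x n) (e n) (h.nonneg n) (h.step_nonneg n) (h.step_le_one n)
      (h.sq_le n)
    rw [← h.succ_eq, ← sq_abs (e n), ← Real.rpow_two, ← Real.rpow_mul (abs_nonneg _)] at this
    simp only [sum_range_succ, linearCoeff] at ih ⊢
    linarith

lemma exists_sum_step_mul_le (hγ : ∀ n, 0 ≤ γ n) {R y m : ℕ → ℝ} (hR : ∀ n, 0 ≤ R n) {C : ℝ}
    (hm : ∀ n, m n ≤ C) (hE : (fun n => ∑ k ∈ range (n + 1), γ k * (y k - m k)) =o[atTop] R)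
    {δ : ℝ} (hδ : 0 < δ) :
    ∃ K, 0 ≤ K ∧ ∀ n, ∑ k ∈ range (n + 1), γ k * y k ≤
      δ * R n + K * (1 + ∑ k ∈ range (n + 1), γ k) := by
  obtain ⟨K, hK, hKE⟩ := exists_le_mul_add_of_isLittleO hR hE hδ
  refine ⟨K + |C|, by positivity, fun n => ?_⟩
  have hγn : 0 ≤ ∑ k ∈ range (n + 1), γ k := sum_nonneg fun k _ => hγ k
  calc ∑ k ∈ range (n + 1), γ k * y k
      = ∑ k ∈ range (n + 1), γ k * (y k - m k) + ∑ k ∈ range (n + 1), γ k * m k := by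
        rw [← sum_add_distrib]
        exact sum_congr rfl fun k _ => by ring
    _ ≤ (δ * R n + K) + ∑ k ∈ range (n + 1), γ k * |C| := by
        gcongr with k
        · exact hKE n
        · exact hγ k
        · exact (hm k).trans (le_abs_self C)
    _ ≤ δ * R n + (K + |C|) * (1 + ∑ k ∈ range (n + 1), γ k) := by
        rw [← sum_mul]
        nlinarith [mul_nonneg hK hγn, abs_nonneg C]

theorem momentNormalizer_isBigO (h : ContractiveRecursion γ W x e) (hq : 1 ≤ q) {m : ℕ → ℝ} {C : ℝ}
    (hm : ∀ n, m n ≤ C)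
    (hlin : (fun n => ∑ k ∈ range (n + 1), linearCoeff q γ W x k * e k) =o[atTop]
      momentNormalizer q γ W)
    (hpow : (fun n => ∑ k ∈ range (n + 1), γ k * (|e k| ^ (2 * q) - m k)) =o[atTop]
      momentNormalizer q γ W) :
    momentNormalizer q γ W =O[atTop] fun n => 1 + ∑ k ∈ range (n + 1), γ k := by
  have hR : ∀ n, 0 ≤ momentNormalizer q γ W n := fun n =>
    (momentNormalizer_pos h.step_nonneg h.nonneg n).le
  obtain ⟨C₀, hC₀, hsum⟩ := h.exists_rpow_add_sum_le hq
  obtain ⟨K₁, hK₁, hlin⟩ :=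
    exists_le_mul_add_of_isLittleO hR hlin (δ := 1 / 12) (by norm_num)
  obtain ⟨K₂, hK₂, hpow⟩ := exists_sum_step_mul_le h.step_nonneg hR hm hpow
    (δ := 1 / (12 * (C₀ + 1))) (by positivity)
  have hW0 := Real.rpow_nonneg (h.nonneg 0) q
  refine .of_bound (2 + 6 * (W 0 ^ q + K₁ + C₀ * K₂)) (Eventually.of_forall fun n => ?_)
  rw [Real.norm_of_nonneg (hR n)]
  refine (momentNormalizer_le_of_rpow_succ_le h.step_nonneg h.nonneg
    (K := W 0 ^ q + K₁ + C₀ * K₂) ?_ (fun n => ?_) n).trans ?_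
  · linarith [mul_nonneg hC₀ hK₂]
  · have hG : 0 ≤ ∑ k ∈ range (n + 1), γ k := sum_nonneg fun k _ => h.step_nonneg k
    have hcoef : C₀ * (1 / (12 * (C₀ + 1))) ≤ 1 / 12 := by
      rw [mul_one_div, div_le_div_iff₀ (by positivity) (by norm_num)]
      linarith
    have hpowC := mul_le_mul_of_nonneg_left (hpow n) hC₀
    have hcoefR := mul_le_mul_of_nonneg_right hcoef (hR n)
    linarith [hsum (n + 1), hlin n, mul_nonneg (add_nonneg hW0 hK₁) hG]
  · gcongr
    exact le_abs_self _

end ContractiveRecursion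

end ContractiveRecursions

section QuadraticForms

variable {ι : Type*} [Fintype ι] {A : Matrix ι ι ℝ}

lemma dotProduct_self_nonneg_real (x : ι → ℝ) : 0 ≤ x ⬝ᵥ x :=
  sum_nonneg fun i _ => mul_self_nonneg (x i)

lemma sq_dotProduct_le (x y : ι → ℝ) : (x ⬝ᵥ y) ^ 2 ≤ (x ⬝ᵥ x) * (y ⬝ᵥ y) := by
  simpa only [dotProduct, sq] using sum_mul_sq_le_sq_mul_sq univ x y

lemma dotProduct_mulVec_swap (hA : A.IsHermitian) (x y : ι → ℝ) :
    x ⬝ᵥ (A *ᵥ y) = y ⬝ᵥ (A *ᵥ x) := by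
  rw [dotProduct_mulVec, ← mulVec_transpose, ← conjTranspose_eq_transpose_of_trivial, hA.eq,
    dotProduct_comm]

lemma quadForm_nonneg (hA : A.PosSemidef) (x : ι → ℝ) : 0 ≤ x ⬝ᵥ (A *ᵥ x) := by
  simpa using hA.dotProduct_mulVec_nonneg x

lemma quadForm_add_smul (hA : A.IsHermitian) (x y : ι → ℝ) (t : ℝ) :
    (x + t • y) ⬝ᵥ (A *ᵥ (x + t • y)) =
      x ⬝ᵥ (A *ᵥ x) + 2 * (y ⬝ᵥ (A *ᵥ x) * t) + y ⬝ᵥ (A *ᵥ y) * t ^ 2 := by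
  simp only [mulVec_add, mulVec_smul, dotProduct_add, add_dotProduct, dotProduct_smul,
    smul_dotProduct, smul_eq_mul, dotProduct_mulVec_swap hA x y]
  ring

lemma sq_dotProduct_mulVec_le (hA : A.PosSemidef) (x y : ι → ℝ) :
    (x ⬝ᵥ (A *ᵥ y)) ^ 2 ≤ (x ⬝ᵥ (A *ᵥ x)) * (y ⬝ᵥ (A *ᵥ y)) := by
  have hdiscrim := discrim_le_zero (a := x ⬝ᵥ (A *ᵥ x)) (b := 2 * (x ⬝ᵥ (A *ᵥ y)))
    (c := y ⬝ᵥ (A *ᵥ y)) fun t => by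
      have := quadForm_nonneg hA (y + t • x)
      rw [quadForm_add_smul hA.isHermitian] at this
      linarith
  rw [discrim] at hdiscrim
  linarith

open scoped MatrixOrder in
lemma quadForm_le_trace_mul (hA : A.PosSemidef) (x : ι → ℝ) :
    x ⬝ᵥ (A *ᵥ x) ≤ A.trace * (x ⬝ᵥ x) := by
  classical
  obtain ⟨C, rfl⟩ := CStarAlgebra.nonneg_iff_eq_star_mul_self.1 hA.nonneg
  calc x ⬝ᵥ ((star C * C) *ᵥ x) = ∑ i, (C i ⬝ᵥ x) ^ 2 := by
        rw [← mulVec_mulVec, dotProduct_mulVec, star_eq_conjTranspose,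
          conjTranspose_eq_transpose_of_trivial, vecMul_transpose]
        exact sum_congr rfl fun i _ => (sq _).symm
    _ ≤ ∑ i, (C i ⬝ᵥ C i) * (x ⬝ᵥ x) := sum_le_sum fun i _ => sq_dotProduct_le (C i) x
    _ = (star C * C).trace * (x ⬝ᵥ x) := by
        rw [← sum_mul, trace_mul_comm]
        rfl

variable [DecidableEq ι]

lemma dotProduct_self_le_trace_mul_quadForm_inv (hA : A.PosDef) (x : ι → ℝ) :
    x ⬝ᵥ x ≤ A.trace * (x ⬝ᵥ (A⁻¹ *ᵥ x)) := by
  have hAy : A *ᵥ (A⁻¹ *ᵥ x) = x := by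
    rw [mulVec_mulVec, mul_nonsing_inv _ ((isUnit_iff_isUnit_det _).1 hA.isUnit), one_mulVec]
  have hCS := sq_dotProduct_mulVec_le hA.posSemidef x (A⁻¹ *ᵥ x)
  rw [hAy, dotProduct_comm (A⁻¹ *ᵥ x)] at hCS
  have hinv := quadForm_nonneg hA.inv.posSemidef x
  have htrace := mul_le_mul_of_nonneg_right (quadForm_le_trace_mul hA.posSemidef x) hinv
  rcases (dotProduct_self_nonneg_real x).eq_or_lt with hx | hx
  · rw [← hx]
    exact mul_nonneg hA.posSemidef.trace_nonneg hinv
  · nlinarith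

end QuadraticForms

section RankOneUpdate

variable {ι : Type*} {A B : Matrix ι ι ℝ} {φ : ι → ℝ}

lemma posDef_add_vecMulVec_self [Finite ι] (hA : A.PosDef) (φ : ι → ℝ) :
    (A + vecMulVec φ φ).PosDef :=
  hA.add_posSemidef (by simpa using posSemidef_vecMulVec_self_star φ)

variable [Fintype ι] [DecidableEq ι]

lemma dotProduct_inv_mulVec_sub (hA : A.PosDef) (x y : ι → ℝ) :
    x ⬝ᵥ (A⁻¹ *ᵥ y) - x ⬝ᵥ ((A + vecMulVec φ φ)⁻¹ *ᵥ y) =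
      x ⬝ᵥ (A⁻¹ *ᵥ φ) * (φ ⬝ᵥ ((A + vecMulVec φ φ)⁻¹ *ᵥ y)) := by
  have hunit : IsUnit A ↔ IsUnit (A + vecMulVec φ φ) :=
    iff_of_true hA.isUnit (posDef_add_vecMulVec_self hA φ).isUnit
  rw [← dotProduct_sub, ← sub_mulVec, inv_sub_inv hunit, add_sub_cancel_left, ← mulVec_mulVec,
    ← mulVec_mulVec, vecMulVec_mulVec, op_smul_eq_smul, mulVec_smul, dotProduct_smul, smul_eq_mul,
    mul_comm]

lemma dotProduct_inv_mulVec_eq (hA : A.PosDef) (y : ι → ℝ) :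
    φ ⬝ᵥ (A⁻¹ *ᵥ y) =
      (1 + φ ⬝ᵥ (A⁻¹ *ᵥ φ)) * (φ ⬝ᵥ ((A + vecMulVec φ φ)⁻¹ *ᵥ y)) := by
  linarith [dotProduct_inv_mulVec_sub (φ := φ) hA φ y]

lemma quadForm_inv_sub (hA : A.PosDef) (x : ι → ℝ) :
    x ⬝ᵥ (A⁻¹ *ᵥ x) - x ⬝ᵥ ((A + vecMulVec φ φ)⁻¹ *ᵥ x) =
      (1 + φ ⬝ᵥ (A⁻¹ *ᵥ φ)) * (φ ⬝ᵥ ((A + vecMulVec φ φ)⁻¹ *ᵥ x)) ^ 2 := by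
  rw [dotProduct_inv_mulVec_sub hA, dotProduct_mulVec_swap hA.inv.isHermitian,
    dotProduct_inv_mulVec_eq hA]
  ring

lemma sq_dotProduct_inv_mulVec_le (hA : A.PosDef) (x : ι → ℝ) :
    (φ ⬝ᵥ ((A + vecMulVec φ φ)⁻¹ *ᵥ x)) ^ 2 ≤
      x ⬝ᵥ (A⁻¹ *ᵥ x) - x ⬝ᵥ ((A + vecMulVec φ φ)⁻¹ *ᵥ x) := by
  rw [quadForm_inv_sub hA]
  exact le_mul_of_one_le_left (sq_nonneg _)
    (le_add_of_nonneg_right (quadForm_nonneg hA.inv.posSemidef φ))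

lemma quadForm_inv_sub_le (hA : A.PosDef) (x : ι → ℝ) :
    x ⬝ᵥ (A⁻¹ *ᵥ x) - x ⬝ᵥ ((A + vecMulVec φ φ)⁻¹ *ᵥ x) ≤
      φ ⬝ᵥ ((A + vecMulVec φ φ)⁻¹ *ᵥ φ) * (x ⬝ᵥ (A⁻¹ *ᵥ x)) := by
  have hCS := sq_dotProduct_mulVec_le hA.inv.posSemidef φ x
  have hg := quadForm_nonneg hA.inv.posSemidef φ
  have hf := dotProduct_inv_mulVec_eq (φ := φ) hA φ
  rw [dotProduct_inv_mulVec_eq hA x] at hCS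
  rw [quadForm_inv_sub hA]
  set g := φ ⬝ᵥ (A⁻¹ *ᵥ φ)
  set f := φ ⬝ᵥ ((A + vecMulVec φ φ)⁻¹ *ᵥ φ)
  set b := φ ⬝ᵥ ((A + vecMulVec φ φ)⁻¹ *ᵥ x)
  refine le_of_mul_le_mul_left ?_ (by linarith : 0 < 1 + g)
  calc (1 + g) * ((1 + g) * b ^ 2) = ((1 + g) * b) ^ 2 := by ring
    _ ≤ g * (x ⬝ᵥ (A⁻¹ *ᵥ x)) := hCS
    _ = (1 + g) * (f * (x ⬝ᵥ (A⁻¹ *ᵥ x))) := by rw [← mul_assoc, ← hf]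

lemma det_sub_vecMulVec_self (hB : IsUnit B.det) (φ : ι → ℝ) :
    (B - vecMulVec φ φ).det = B.det * (1 - φ ⬝ᵥ (B⁻¹ *ᵥ φ)) := by
  have hfactor : B - vecMulVec φ φ = B * (1 + vecMulVec (-(B⁻¹ *ᵥ φ)) φ) := by
    rw [mul_add, mul_vecMulVec, mulVec_neg, mulVec_mulVec, mul_nonsing_inv _ hB, one_mulVec,
      mul_one, neg_vecMulVec, sub_eq_add_neg]
  rw [hfactor, det_mul, vecMulVec_eq Unit, det_one_add_replicateCol_mul_replicateRow,
    dotProduct_neg, sub_eq_add_neg]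

lemma det_add_vecMulVec_self_mul (hA : A.PosDef) :
    (A + vecMulVec φ φ).det * (1 - φ ⬝ᵥ ((A + vecMulVec φ φ)⁻¹ *ᵥ φ)) = A.det := by
  rw [← det_sub_vecMulVec_self (posDef_add_vecMulVec_self hA φ).det_pos.ne'.isUnit,
    add_sub_cancel_right]

lemma quadForm_inv_add_vecMulVec_self_lt_one (hA : A.PosDef) :
    φ ⬝ᵥ ((A + vecMulVec φ φ)⁻¹ *ᵥ φ) < 1 := by
  have hdet := det_add_vecMulVec_self_mul (φ := φ) hA
  have hpos := (pos_iff_pos_of_mul_pos (hdet ▸ hA.det_pos)).1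
    (posDef_add_vecMulVec_self hA φ).det_pos
  linarith

end RankOneUpdate

section MatrixLimits

variable {ι κ : Type*} [Fintype ι] [DecidableEq ι] {l : Filter κ} {A : κ → Matrix ι ι ℝ}
  {α : κ → ℝ} {L : Matrix ι ι ℝ}

lemma tendsto_trace_mul_trace_inv (hα : ∀ n, α n ≠ 0) (hA : ∀ n, IsUnit (A n).det)
    (hL : IsUnit L.det) (h : Tendsto (fun n => (α n)⁻¹ • A n) l (𝓝 L)) :
    Tendsto (fun n => (A n).trace * (A n)⁻¹.trace) l (𝓝 (L.trace * L⁻¹.trace)) := by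
  have hcont : ContinuousAt Inv.inv L :=
    continuousAt_matrix_inv L (by simpa using NormedRing.inverse_continuousAt hL.unit)
  have htrace {B : κ → Matrix ι ι ℝ} {N} (hB : Tendsto B l (𝓝 N)) :
      Tendsto (fun n => (B n).trace) l (𝓝 N.trace) :=
    (continuous_id.matrix_trace.tendsto N).comp hB
  refine ((htrace h).mul (htrace (hcont.tendsto.comp h))).congr fun n => ?_
  have := invertibleOfNonzero (inv_ne_zero (hα n))
  have hαn := hα n
  rw [Function.comp_apply, Matrix.inv_smul _ _ (hA n), trace_smul, trace_smul, invOf_eq_inv,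
    inv_inv, smul_eq_mul, smul_eq_mul]
  field_simp

lemma tendsto_log_det_atTop [Nonempty ι] (hα : Tendsto α l atTop) (hL : 0 < L.det)
    (h : Tendsto (fun n => (α n)⁻¹ • A n) l (𝓝 L)) :
    Tendsto (fun n => Real.log (A n).det) l atTop := by
  have hdet : Tendsto (fun n => ((α n)⁻¹ • A n).det) l (𝓝 L.det) :=
    (continuous_id.matrix_det.tendsto L).comp h
  refine Real.tendsto_log_atTop.comp ((Tendsto.atTop_mul_pos hL
    ((tendsto_pow_atTop (Fintype.card_ne_zero (α := ι))).comp hα) hdet).congr' ?_)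
  filter_upwards [hα.eventually_gt_atTop 0] with n hn
  rw [Function.comp_apply, det_smul, inv_pow, mul_inv_cancel_left₀ (by positivity)]

end MatrixLimits

section Paths

variable {ι : Type*}

/-- The matrix `A n = S + ∑_{k < n} φ k (φ k)ᵗ` of the regressors observed before time `n`. The
index is shifted by one with respect to `Smat`, so that `A 0 = S`. -/
def infoMatrix (S : Matrix ι ι ℝ) (φ : ℕ → ι → ℝ) (n : ℕ) : Matrix ι ι ℝ :=
  S + ∑ k ∈ range n, vecMulVec (φ k) (φ k)

lemma infoMatrix_succ (S : Matrix ι ι ℝ) (φ : ℕ → ι → ℝ) (n : ℕ) :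
    infoMatrix S φ (n + 1) = infoMatrix S φ n + vecMulVec (φ n) (φ n) := by
  rw [infoMatrix, infoMatrix, sum_range_succ, add_assoc]

lemma posDef_infoMatrix [Finite ι] {S : Matrix ι ι ℝ} (hS : S.PosDef) (φ : ℕ → ι → ℝ) (n : ℕ) :
    (infoMatrix S φ n).PosDef := by
  induction n with
  | zero => simpa [infoMatrix] using hS
  | succ n ih =>
    rw [infoMatrix_succ]
    exact posDef_add_vecMulVec_self ih _

variable [Fintype ι]

/-- The normalized squared length of the regressor `φ n`. It is comparable to the explosion
coefficient as long as `infoMatrix S φ` is well conditioned. -/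
def traceStep (S : Matrix ι ι ℝ) (φ : ℕ → ι → ℝ) (n : ℕ) : ℝ :=
  φ n ⬝ᵥ φ n / (infoMatrix S φ (n + 1)).trace

/-- The squared length of `M n`, normalized by the trace of `infoMatrix S φ n`. It is comparable to
`quadEnergy S φ M n` as long as `infoMatrix S φ` is well conditioned, and it solves a
contractive recursion. -/
def traceEnergy (S : Matrix ι ι ℝ) (φ M : ℕ → ι → ℝ) (n : ℕ) : ℝ :=
  M n ⬝ᵥ M n / (infoMatrix S φ n).trace

/-- The coefficient of the innovation in the recursion satisfied by `traceEnergy S φ M`. -/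
def traceCross (S : Matrix ι ι ℝ) (φ M : ℕ → ι → ℝ) (n : ℕ) : ℝ :=
  M n ⬝ᵥ φ n / (infoMatrix S φ (n + 1)).trace

lemma trace_infoMatrix_succ (S : Matrix ι ι ℝ) (φ : ℕ → ι → ℝ) (n : ℕ) :
    (infoMatrix S φ (n + 1)).trace = (infoMatrix S φ n).trace + φ n ⬝ᵥ φ n := by
  rw [infoMatrix_succ, trace_add, trace_vecMulVec]

variable {S : Matrix ι ι ℝ} (hS : S.PosDef) (φ M : ℕ → ι → ℝ)
include hS

lemma traceStep_nonneg (n : ℕ) : 0 ≤ traceStep S φ n :=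
  div_nonneg (dotProduct_self_nonneg_real _) (posDef_infoMatrix hS φ _).posSemidef.trace_nonneg

lemma traceEnergy_nonneg (n : ℕ) : 0 ≤ traceEnergy S φ M n :=
  div_nonneg (dotProduct_self_nonneg_real _) (posDef_infoMatrix hS φ _).posSemidef.trace_nonneg

section Recursion

variable [Nonempty ι]

lemma trace_infoMatrix_pos (n : ℕ) : 0 < (infoMatrix S φ n).trace :=
  (posDef_infoMatrix hS φ n).trace_pos

lemma traceStep_le_one (n : ℕ) : traceStep S φ n ≤ 1 := by
  rw [traceStep, div_le_one (trace_infoMatrix_pos hS φ _), trace_infoMatrix_succ]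
  exact le_add_of_nonneg_left (trace_infoMatrix_pos hS φ n).le

lemma one_sub_traceStep_mul_traceEnergy (n : ℕ) :
    (1 - traceStep S φ n) * traceEnergy S φ M n =
      M n ⬝ᵥ M n / (infoMatrix S φ (n + 1)).trace := by
  have h₀ := trace_infoMatrix_pos hS φ n
  have h₁ := trace_infoMatrix_pos hS φ (n + 1)
  rw [traceStep, traceEnergy, eq_sub_of_add_eq' (trace_infoMatrix_succ S φ n).symm]
  field_simp
  ring

theorem contractiveRecursion_traceEnergy {e : ℕ → ℝ} (hM : ∀ n, M (n + 1) = M n + e n • φ n) :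
    ContractiveRecursion (traceStep S φ) (traceEnergy S φ M) (traceCross S φ M) e where
  step_nonneg := traceStep_nonneg hS φ
  step_le_one := traceStep_le_one hS φ
  nonneg := traceEnergy_nonneg hS φ M
  sq_le n := by
    have := trace_infoMatrix_pos hS φ (n + 1)
    rw [one_sub_traceStep_mul_traceEnergy hS, traceCross, traceStep, div_pow, div_mul_div_comm,
      ← sq]
    gcongr
    exact sq_dotProduct_le _ _
  succ_eq n := by
    rw [one_sub_traceStep_mul_traceEnergy hS, traceEnergy, traceCross, traceStep, hM]
    simp only [add_dotProduct, dotProduct_add, smul_dotProduct, dotProduct_smul, smul_eq_mul,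
      dotProduct_comm (φ n) (M n)]
    ring

end Recursion

variable [DecidableEq ι]
omit hS

/-- The explosion coefficient `f n = (φ n)ᵗ A⁻¹ φ n`, where `A = infoMatrix S φ (n + 1)`. -/
def explosionCoeff (S : Matrix ι ι ℝ) (φ : ℕ → ι → ℝ) (n : ℕ) : ℝ :=
  φ n ⬝ᵥ ((infoMatrix S φ (n + 1))⁻¹ *ᵥ φ n)

/-- The quadratic form `(M n)ᵗ (A n)⁻¹ M n`, where `A = infoMatrix S φ`. -/
def quadEnergy (S : Matrix ι ι ℝ) (φ M : ℕ → ι → ℝ) (n : ℕ) : ℝ :=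
  M n ⬝ᵥ ((infoMatrix S φ n)⁻¹ *ᵥ M n)

/-- The decrease of the quadratic form `(M n)ᵗ A⁻¹ M n` when the regressor `φ n` is added to
`A = infoMatrix S φ n`: this is the increment `a_n(1)`. -/
def quadDrop (S : Matrix ι ι ℝ) (φ M : ℕ → ι → ℝ) (n : ℕ) : ℝ :=
  quadEnergy S φ M n - M n ⬝ᵥ ((infoMatrix S φ (n + 1))⁻¹ *ᵥ M n)

/-- The coefficient of the innovation in the recursion satisfied by `quadEnergy S φ M`. -/
def quadCross (S : Matrix ι ι ℝ) (φ M : ℕ → ι → ℝ) (n : ℕ) : ℝ :=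
  φ n ⬝ᵥ ((infoMatrix S φ (n + 1))⁻¹ *ᵥ M n)

include hS

lemma explosionCoeff_nonneg (n : ℕ) : 0 ≤ explosionCoeff S φ n :=
  quadForm_nonneg (posDef_infoMatrix hS φ _).inv.posSemidef _

lemma explosionCoeff_lt_one (n : ℕ) : explosionCoeff S φ n < 1 := by
  rw [explosionCoeff, infoMatrix_succ]
  exact quadForm_inv_add_vecMulVec_self_lt_one (posDef_infoMatrix hS φ n)

lemma log_det_infoMatrix_succ_sub (n : ℕ) :
    Real.log (infoMatrix S φ (n + 1)).det - Real.log (infoMatrix S φ n).det =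
      -Real.log (1 - explosionCoeff S φ n) := by
  have hdet : (infoMatrix S φ (n + 1)).det * (1 - explosionCoeff S φ n) =
      (infoMatrix S φ n).det := by
    rw [explosionCoeff, infoMatrix_succ]
    exact det_add_vecMulVec_self_mul (posDef_infoMatrix hS φ n)
  rw [← hdet, Real.log_mul (posDef_infoMatrix hS φ _).det_pos.ne'
    (sub_pos.2 (explosionCoeff_lt_one hS φ n)).ne']
  ring

lemma sum_neg_log_one_sub_explosionCoeff (n : ℕ) :
    ∑ k ∈ range n, -Real.log (1 - explosionCoeff S φ k) =
      Real.log (infoMatrix S φ n).det - Real.log S.det := by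
  have h₀ : infoMatrix S φ 0 = S := by simp [infoMatrix]
  simp only [← log_det_infoMatrix_succ_sub hS]
  rw [sum_range_sub fun k => Real.log (infoMatrix S φ k).det, h₀]

lemma traceStep_le_explosionCoeff [Nonempty ι] (n : ℕ) :
    traceStep S φ n ≤ explosionCoeff S φ n := by
  rw [traceStep, div_le_iff₀' (trace_infoMatrix_pos hS φ _)]
  exact dotProduct_self_le_trace_mul_quadForm_inv (posDef_infoMatrix hS φ _) _

lemma quadEnergy_nonneg (n : ℕ) : 0 ≤ quadEnergy S φ M n :=
  quadForm_nonneg (posDef_infoMatrix hS φ _).inv.posSemidef _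

lemma sq_quadCross_le_quadDrop (n : ℕ) : quadCross S φ M n ^ 2 ≤ quadDrop S φ M n := by
  rw [quadCross, quadDrop, quadEnergy, infoMatrix_succ]
  exact sq_dotProduct_inv_mulVec_le (posDef_infoMatrix hS φ n) _

lemma quadDrop_nonneg (n : ℕ) : 0 ≤ quadDrop S φ M n :=
  (sq_nonneg _).trans (sq_quadCross_le_quadDrop hS φ M n)

lemma quadDrop_le (n : ℕ) : quadDrop S φ M n ≤ explosionCoeff S φ n * quadEnergy S φ M n := by
  rw [quadDrop, quadEnergy, explosionCoeff, infoMatrix_succ]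
  exact quadForm_inv_sub_le (posDef_infoMatrix hS φ n) _

lemma quadEnergy_succ {e : ℕ → ℝ} (hM : ∀ n, M (n + 1) = M n + e n • φ n) (n : ℕ) :
    quadEnergy S φ M (n + 1) = quadEnergy S φ M n - quadDrop S φ M n +
      2 * (quadCross S φ M n * e n) + explosionCoeff S φ n * e n ^ 2 := by
  rw [quadEnergy, hM, quadForm_add_smul (posDef_infoMatrix hS φ _).inv.isHermitian, quadDrop,
    quadCross, explosionCoeff]
  ring

lemma sum_quadDrop_eq {e : ℕ → ℝ} (hM : ∀ n, M (n + 1) = M n + e n • φ n) (v : ℝ) (n : ℕ) :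
    ∑ k ∈ range n, quadDrop S φ M k =
      quadEnergy S φ M 0 - quadEnergy S φ M n + 2 * ∑ k ∈ range n, quadCross S φ M k * e k +
        ∑ k ∈ range n, explosionCoeff S φ k * (e k ^ 2 - v) +
        v * ∑ k ∈ range n, explosionCoeff S φ k := by
  induction n with
  | zero => simp
  | succ n ih =>
    simp only [sum_range_succ, ih, quadEnergy_succ hS φ M hM]
    ring

section WellConditioned

variable {K : ℝ} (hK : ∀ n, (infoMatrix S φ n).trace * (infoMatrix S φ n)⁻¹.trace ≤ K)
  [Nonempty ι]
include hK

lemma condition_bound_pos : 0 < K :=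
  (mul_pos (trace_infoMatrix_pos hS φ 0) (posDef_infoMatrix hS φ 0).inv.trace_pos).trans_le (hK 0)

lemma quadForm_inv_infoMatrix_le (n : ℕ) (x : ι → ℝ) :
    x ⬝ᵥ ((infoMatrix S φ n)⁻¹ *ᵥ x) ≤ K * (x ⬝ᵥ x / (infoMatrix S φ n).trace) := by
  have htrace := trace_infoMatrix_pos hS φ n
  rw [← mul_div_assoc, le_div_iff₀' htrace]
  calc (infoMatrix S φ n).trace * (x ⬝ᵥ ((infoMatrix S φ n)⁻¹ *ᵥ x))
      ≤ (infoMatrix S φ n).trace * ((infoMatrix S φ n)⁻¹.trace * (x ⬝ᵥ x)) := by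
        gcongr
        exact quadForm_le_trace_mul (posDef_infoMatrix hS φ n).inv.posSemidef x
    _ ≤ K * (x ⬝ᵥ x) := by
        rw [← mul_assoc]
        exact mul_le_mul_of_nonneg_right (hK n) (dotProduct_self_nonneg_real x)

lemma explosionCoeff_le (n : ℕ) : explosionCoeff S φ n ≤ K * traceStep S φ n :=
  quadForm_inv_infoMatrix_le hS φ hK (n + 1) (φ n)

lemma quadEnergy_le (n : ℕ) : quadEnergy S φ M n ≤ K * traceEnergy S φ M n :=
  quadForm_inv_infoMatrix_le hS φ hK n (M n)

lemma quadDrop_pow_succ_le {q : ℝ} {p : ℕ} (hpq : (p + 1 : ℕ) ≤ q) (n : ℕ) :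
    quadDrop S φ M n ^ (p + 1) ≤ K ^ (p + 2) * explosionCoeff S φ n ^ p *
      (traceStep S φ n * (1 + traceEnergy S φ M n ^ q)) := by
  have hf := explosionCoeff_nonneg hS φ n
  have hW := traceEnergy_nonneg hS φ M n
  have hK₀ := condition_bound_pos hS φ hK
  calc quadDrop S φ M n ^ (p + 1)
      ≤ (explosionCoeff S φ n * (K * traceEnergy S φ M n)) ^ (p + 1) := by
        gcongr
        · exact quadDrop_nonneg hS φ M n
        · exact (quadDrop_le hS φ M n).trans (by gcongr; exact quadEnergy_le hS φ M hK n)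
    _ = K ^ (p + 1) * explosionCoeff S φ n ^ p *
          (explosionCoeff S φ n * traceEnergy S φ M n ^ (p + 1)) := by ring
    _ ≤ K ^ (p + 1) * explosionCoeff S φ n ^ p *
          (K * traceStep S φ n * (1 + traceEnergy S φ M n ^ q)) := by
        have hγ := mul_nonneg hK₀.le (traceStep_nonneg hS φ n)
        gcongr
        · exact explosionCoeff_le hS φ hK n
        · rw [← Real.rpow_natCast]
          exact rpow_le_one_add_rpow hW (by positivity) hpq
    _ = _ := by ring

end WellConditioned

end Paths

section LogDetAsymptotics

open Asymptotics

lemma isEquivalent_neg_log_one_sub : (fun x : ℝ => -Real.log (1 - x)) ~[𝓝 0] fun x => x := by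
  have : HasDerivAt (fun x : ℝ => -Real.log (1 - x)) 1 0 := by
    simpa using (((hasDerivAt_id' (0 : ℝ)).const_sub 1).log (by norm_num)).fun_neg
  exact IsLittleO.isEquivalent (by simpa [Pi.sub_def] using this.isLittleO)

lemma isEquivalent_sum_range {u v : ℕ → ℝ} (h : u ~[atTop] v) (hv : 0 ≤ v)
    (hsum : Tendsto (fun n => ∑ k ∈ range n, v k) atTop atTop) :
    (fun n => ∑ k ∈ range n, u k) ~[atTop] fun n => ∑ k ∈ range n, v k :=
  IsLittleO.isEquivalent <| by
    simpa only [Pi.sub_def, sum_sub_distrib] using h.isLittleO.sum_range hv hsum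

lemma isLittleO_of_rpow_isBigO {α : Type*} {l : Filter α} {u v : α → ℝ} {q : ℝ} (hq : 1 < q)
    (hu : ∀ x, 0 ≤ u x) (hv : Tendsto v l atTop) (h : (fun x => u x ^ q) =O[l] v) :
    u =o[l] v := by
  have hq₀ : 0 < q := by linarith
  have hid : (fun x : ℝ => x) =o[atTop] fun x => x ^ q := by
    refine (isLittleO_iff_tendsto' ?_).2 ?_
    · filter_upwards [eventually_gt_atTop 0] with x hx hx₀
      exact absurd hx₀ (Real.rpow_pos_of_pos hx q).ne'
    · refine (tendsto_rpow_neg_atTop (sub_pos.2 hq)).congr' ?_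
      filter_upwards [eventually_gt_atTop 0] with x hx
      rw [neg_sub, Real.rpow_sub hx, Real.rpow_one]
  have hpow := (h.trans_isLittleO (hid.comp_tendsto hv)).rpow (r := q⁻¹) (inv_pos.2 hq₀) <| by
    filter_upwards [hv.eventually_ge_atTop 0] with x hx using Real.rpow_nonneg hx q
  refine hpow.congr' (Eventually.of_forall fun x => Real.rpow_rpow_inv (hu x) hq₀.ne') ?_
  filter_upwards [hv.eventually_ge_atTop 0] with x hx using Real.rpow_rpow_inv hx hq₀.ne'

variable {ι : Type*} [Fintype ι] [DecidableEq ι] {S : Matrix ι ι ℝ} (hS : S.PosDef)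
  {φ : ℕ → ι → ℝ} (hdet : Tendsto (fun n => Real.log (infoMatrix S φ n).det) atTop atTop)
include hS hdet

lemma log_det_infoMatrix_isBigO_succ :
    (fun n => Real.log (infoMatrix S φ n).det) =O[atTop]
      fun n => Real.log (infoMatrix S φ (n + 1)).det := by
  refine .of_bound' ?_
  filter_upwards [hdet.eventually_ge_atTop 0] with n hn
  have hf := Real.log_nonpos (sub_pos.2 (explosionCoeff_lt_one hS φ n)).le
    (sub_le_self 1 (explosionCoeff_nonneg hS φ n))
  have hle : Real.log (infoMatrix S φ n).det ≤ Real.log (infoMatrix S φ (n + 1)).det := by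
    linarith [log_det_infoMatrix_succ_sub hS φ n]
  rwa [Real.norm_of_nonneg hn, Real.norm_of_nonneg (hn.trans hle)]

variable (hf : Tendsto (explosionCoeff S φ) atTop (𝓝 0))
include hf

theorem sum_explosionCoeff_isEquivalent :
    (fun n => ∑ k ∈ range n, explosionCoeff S φ k) ~[atTop]
      fun n => Real.log (infoMatrix S φ n).det := by
  have hsum : (fun n => ∑ k ∈ range n, -Real.log (1 - explosionCoeff S φ k)) ~[atTop]
      fun n => Real.log (infoMatrix S φ n).det := by
    simp only [sum_neg_log_one_sub_explosionCoeff hS]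
    exact IsEquivalent.refl.sub_isLittleO
      (isLittleO_const_left.2 (.inr (tendsto_norm_atTop_atTop.comp hdet)))
  refine (isEquivalent_sum_range (isEquivalent_neg_log_one_sub.symm.comp_tendsto hf)
    (fun n => ?_) (hsum.symm.tendsto_atTop hdet)).trans hsum
  have := Real.log_le_sub_one_of_pos (sub_pos.2 (explosionCoeff_lt_one hS φ n))
  simp only [Function.comp_apply, Pi.zero_apply]
  linarith [explosionCoeff_nonneg hS φ n]

variable [Nonempty ι]

lemma one_add_sum_traceStep_isBigO :
    (fun n => 1 + ∑ k ∈ range (n + 1), traceStep S φ k) =O[atTop]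
      fun n => Real.log (infoMatrix S φ n).det := by
  have hconst : (fun _ : ℕ => (2 : ℝ)) =o[atTop] fun n => Real.log (infoMatrix S φ n).det :=
    isLittleO_const_left.2 (.inr (tendsto_norm_atTop_atTop.comp hdet))
  refine (IsBigO.of_bound' (Eventually.of_forall fun n => ?_)).trans
    (hconst.isBigO.add (sum_explosionCoeff_isEquivalent hS hdet hf).isBigO)
  have hγ := sum_nonneg fun k (_ : k ∈ range (n + 1)) => traceStep_nonneg hS φ k
  refine Real.norm_of_nonneg (add_nonneg zero_le_one hγ) |>.trans_le (le_trans ?_ (le_abs_self _))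
  have := sum_le_sum fun k (_ : k ∈ range n) => traceStep_le_explosionCoeff hS φ k
  rw [sum_range_succ]
  linarith [traceStep_le_one hS φ n]

lemma tendsto_sum_traceStep_atTop {K : ℝ}
    (hK : ∀ n, (infoMatrix S φ n).trace * (infoMatrix S φ n)⁻¹.trace ≤ K) :
    Tendsto (fun n => ∑ k ∈ range n, traceStep S φ k) atTop atTop := by
  refine (tendsto_const_mul_atTop_of_pos (condition_bound_pos hS φ hK)).1 <|
    tendsto_atTop_mono (fun n => ?_)
      ((sum_explosionCoeff_isEquivalent hS hdet hf).symm.tendsto_atTop hdet)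
  rw [mul_sum]
  exact sum_le_sum fun k _ => explosionCoeff_le hS φ hK k

section MomentBound

variable {M : ℕ → ι → ℝ} {K q : ℝ}
  (hK : ∀ n, (infoMatrix S φ n).trace * (infoMatrix S φ n)⁻¹.trace ≤ K)
  (hR : momentNormalizer q (traceStep S φ) (traceEnergy S φ M) =O[atTop]
    fun n => 1 + ∑ k ∈ range (n + 1), traceStep S φ k)
include hR

lemma momentNormalizer_isBigO_log_det :
    momentNormalizer q (traceStep S φ) (traceEnergy S φ M) =O[atTop]
      fun n => Real.log (infoMatrix S φ n).det :=
  hR.trans (one_add_sum_traceStep_isBigO hS hdet hf)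

lemma momentNormalizer_isBigO_log_det_succ :
    momentNormalizer q (traceStep S φ) (traceEnergy S φ M) =O[atTop]
      fun n => Real.log (infoMatrix S φ (n + 1)).det :=
  (momentNormalizer_isBigO_log_det hS hdet hf hR).trans (log_det_infoMatrix_isBigO_succ hS hdet)

include hK

lemma quadEnergy_isLittleO_log_det (hq : 1 < q) :
    quadEnergy S φ M =o[atTop] fun n => Real.log (infoMatrix S φ n).det := by
  have hW : traceEnergy S φ M =o[atTop] fun n => Real.log (infoMatrix S φ n).det := by
    refine isLittleO_of_rpow_isBigO hq (traceEnergy_nonneg hS φ M) hdet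
      (IsBigO.trans (.of_bound' (Eventually.of_forall fun n => ?_))
        (momentNormalizer_isBigO_log_det hS hdet hf hR))
    have hWq := Real.rpow_nonneg (traceEnergy_nonneg hS φ M n) q
    have hle := rpow_le_momentNormalizer (q := q) (traceStep_nonneg hS φ)
      (traceEnergy_nonneg hS φ M) (le_refl n)
    rwa [Real.norm_of_nonneg hWq, Real.norm_of_nonneg (hWq.trans hle)]
  refine (IsBigO.of_bound' (Eventually.of_forall fun n => ?_)).trans_isLittleO
    (hW.const_mul_left K)
  rw [Real.norm_of_nonneg (quadEnergy_nonneg hS φ M n)]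
  exact (quadEnergy_le hS φ M hK n).trans (le_abs_self _)

theorem sum_quadDrop_sub_isLittleO {e : ℕ → ℝ} {v : ℝ} (hq : 1 < q)
    (hM : ∀ n, M (n + 1) = M n + e n • φ n)
    (hcross : (fun n => ∑ k ∈ range (n + 1), quadCross S φ M k * e k) =o[atTop]
      momentNormalizer q (traceStep S φ) (traceEnergy S φ M))
    (hsq : (fun n => ∑ k ∈ range (n + 1), explosionCoeff S φ k * (e k ^ 2 - v)) =o[atTop]
      momentNormalizer q (traceStep S φ) (traceEnergy S φ M)) :
    (fun n => ∑ k ∈ range (n + 1), quadDrop S φ M k -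
        v * Real.log (infoMatrix S φ (n + 1)).det) =o[atTop]
      fun n => Real.log (infoMatrix S φ (n + 1)).det := by
  have hshift := tendsto_add_atTop_nat 1
  have hRD := momentNormalizer_isBigO_log_det_succ hS hdet hf hR
  have hinit : (fun _ : ℕ => quadEnergy S φ M 0) =o[atTop]
      fun n => Real.log (infoMatrix S φ (n + 1)).det :=
    isLittleO_const_left.2 (.inr (tendsto_norm_atTop_atTop.comp (hdet.comp hshift)))
  have hlast := (quadEnergy_isLittleO_log_det hS hdet hf hK hR hq).comp_tendsto hshift
  have hexpl := (sum_explosionCoeff_isEquivalent hS hdet hf).isLittleO.comp_tendsto hshift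
  refine ((((hinit.sub hlast).add ((hcross.trans_isBigO hRD).const_mul_left 2)).add
    (hsq.trans_isBigO hRD)).add (hexpl.const_mul_left v)).congr_left fun n => ?_
  rw [sum_quadDrop_eq hS φ M hM v]
  simp only [Function.comp_apply, Pi.sub_apply]
  ring

theorem sum_quadDrop_pow_isLittleO {p : ℕ} (hp : p ≠ 0) (hpq : (p + 1 : ℕ) ≤ q) :
    (fun n => ∑ k ∈ range (n + 1), quadDrop S φ M k ^ (p + 1)) =o[atTop]
      fun n => Real.log (infoMatrix S φ (n + 1)).det := by
  have hγ := traceStep_nonneg hS φ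
  have hW := traceEnergy_nonneg hS φ M
  set g : ℕ → ℝ := fun n => traceStep S φ n * (1 + traceEnergy S φ M n ^ q)
  have hg : 0 ≤ g := mul_one_add_rpow_nonneg hγ hW
  have hgsum : Tendsto (fun n => ∑ k ∈ range n, g k) atTop atTop :=
    tendsto_atTop_mono (fun n => sum_le_sum fun k _ => le_mul_of_one_le_right (hγ k)
      (le_add_of_nonneg_right (Real.rpow_nonneg (hW k) q)))
      (tendsto_sum_traceStep_atTop hS hdet hf hK)
  have hcoef : Tendsto (fun n => K ^ (p + 2) * explosionCoeff S φ n ^ p) atTop (𝓝 0) := by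
    simpa [hp] using (hf.pow p).const_mul (K ^ (p + 2))
  have hpow : (fun n => quadDrop S φ M n ^ (p + 1)) =o[atTop] g := by
    refine (IsBigO.of_bound' (Eventually.of_forall fun n => ?_)).trans_isLittleO
      (((isLittleO_one_iff ℝ).2 hcoef).mul_isBigO (isBigO_refl g atTop) |>.congr_right
        fun n => one_mul (g n))
    rw [Real.norm_of_nonneg (pow_nonneg (quadDrop_nonneg hS φ M n) _)]
    exact (quadDrop_pow_succ_le hS φ M hK hpq n).trans (le_abs_self _)
  refine ((hpow.sum_range hg hgsum).comp_tendsto (tendsto_add_atTop_nat 1)).trans_isBigO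
    (IsBigO.trans (.of_bound' (Eventually.of_forall fun n => ?_))
      (momentNormalizer_isBigO_log_det_succ hS hdet hf hR))
  have hsum := sum_nonneg fun k (_ : k ∈ range (n + 1)) => hg k
  have hle := one_add_sum_le_momentNormalizer (q := q) (γ := traceStep S φ) hW n
  rw [Function.comp_apply, Real.norm_of_nonneg hsum]
  exact (le_add_of_nonneg_left zero_le_one).trans (hle.trans (le_abs_self _))

theorem tendsto_sum_quadDrop_pow {e : ℕ → ℝ} {v : ℝ} {p : ℕ} (hq : 1 < q) (hp : 1 ≤ p)
    (hpq : p ≤ q) (hM : ∀ n, M (n + 1) = M n + e n • φ n)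
    (hcross : (fun n => ∑ k ∈ range (n + 1), quadCross S φ M k * e k) =o[atTop]
      momentNormalizer q (traceStep S φ) (traceEnergy S φ M))
    (hsq : (fun n => ∑ k ∈ range (n + 1), explosionCoeff S φ k * (e k ^ 2 - v)) =o[atTop]
      momentNormalizer q (traceStep S φ) (traceEnergy S φ M)) :
    Tendsto (fun n => (Real.log (infoMatrix S φ (n + 1)).det)⁻¹ *
      ∑ k ∈ Icc 1 n, quadDrop S φ M k ^ p) atTop (𝓝 (if p = 1 then v else 0)) := by
  have hD : Tendsto (fun n => Real.log (infoMatrix S φ (n + 1)).det) atTop atTop :=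
    hdet.comp (tendsto_add_atTop_nat 1)
  have hsum : (fun n => ∑ k ∈ range (n + 1), quadDrop S φ M k ^ p -
      (if p = 1 then v else 0) * Real.log (infoMatrix S φ (n + 1)).det) =o[atTop]
      fun n => Real.log (infoMatrix S φ (n + 1)).det := by
    obtain ⟨p, rfl⟩ := Nat.exists_eq_add_of_le' hp
    rcases eq_or_ne p 0 with rfl | hp₀
    · simpa using sum_quadDrop_sub_isLittleO hS hdet hf hK hR hq hM hcross hsq
    · simpa [hp₀] using sum_quadDrop_pow_isLittleO hS hdet hf hK hR hp₀ hpq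
  have hfirst := hD.const_div_atTop (quadDrop S φ M 0 ^ p)
  have hlim := (hsum.tendsto_div_nhds_zero.sub hfirst).add_const (if p = 1 then v else 0)
  rw [sub_zero, zero_add] at hlim
  refine hlim.congr' ?_
  filter_upwards [hD.eventually_gt_atTop 0] with n hn
  have hsplit : ∑ k ∈ range (n + 1), quadDrop S φ M k ^ p =
      quadDrop S φ M 0 ^ p + ∑ k ∈ Icc 1 n, quadDrop S φ M k ^ p := by
    rw [range_eq_Ico, sum_eq_sum_Ico_succ_bot n.succ_pos]
    rfl
  rw [hsplit]
  field_simp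
  ring

end MomentBound

end LogDetAsymptotics

section Adaptedness

variable {Ω ι : Type*}

section Measurability

variable {m : MeasurableSpace Ω}

lemma measurable_partialSups {f : ℕ → Ω → ℝ} {n : ℕ} (hf : ∀ k ≤ n, Measurable (f k)) :
    Measurable fun ω => partialSups (f · ω) n := by
  simp only [partialSups_eq_sup'_range]
  exact Finset.measurable_range_sup'' hf

lemma stronglyMeasurable_infoMatrix {S : Matrix ι ι ℝ} {Φ : ℕ → Ω → ι → ℝ} {n : ℕ}
    (hΦ : ∀ k < n, StronglyMeasurable (Φ k)) :
    StronglyMeasurable fun ω => infoMatrix S (Φ · ω) n :=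
  stronglyMeasurable_const.add <| Finset.stronglyMeasurable_fun_sum _ fun k hk =>
    (continuous_id.matrix_vecMulVec continuous_id).comp_stronglyMeasurable (hΦ k (mem_range.1 hk))

variable [Fintype ι]

lemma stronglyMeasurable_dotProduct {x y : Ω → ι → ℝ} (hx : StronglyMeasurable x)
    (hy : StronglyMeasurable y) : StronglyMeasurable fun ω => x ω ⬝ᵥ y ω :=
  (continuous_fst.dotProduct continuous_snd).comp_stronglyMeasurable (hx.prodMk hy)

lemma stronglyMeasurable_trace {A : Ω → Matrix ι ι ℝ} (hA : StronglyMeasurable A) :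
    StronglyMeasurable fun ω => (A ω).trace :=
  continuous_id.matrix_trace.comp_stronglyMeasurable hA

lemma stronglyMeasurable_matrix_inv [DecidableEq ι] {A : Ω → Matrix ι ι ℝ}
    (hA : StronglyMeasurable A) : StronglyMeasurable fun ω => (A ω)⁻¹ := by
  simp only [Matrix.inv_def, Ring.inverse_eq_inv']
  exact (continuous_id.matrix_det.comp_stronglyMeasurable hA).measurable.inv.stronglyMeasurable.smul
    (continuous_id.matrix_adjugate.comp_stronglyMeasurable hA)

lemma stronglyMeasurable_quadForm_inv [DecidableEq ι] {A : Ω → Matrix ι ι ℝ} {x y : Ω → ι → ℝ}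
    (hA : StronglyMeasurable A) (hx : StronglyMeasurable x) (hy : StronglyMeasurable y) :
    StronglyMeasurable fun ω => x ω ⬝ᵥ ((A ω)⁻¹ *ᵥ y ω) :=
  stronglyMeasurable_dotProduct hx <|
    (continuous_fst.matrix_mulVec continuous_snd).comp_stronglyMeasurable
      ((stronglyMeasurable_matrix_inv hA).prodMk hy)

end Measurability

variable {m0 : MeasurableSpace Ω} {F : Filtration ℕ m0}

lemma stronglyAdapted_momentNormalizer {γ W : ℕ → Ω → ℝ} (hγ : StronglyAdapted F γ)
    (hW : StronglyAdapted F W) (q : ℝ) :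
    StronglyAdapted F fun n ω => momentNormalizer q (γ · ω) (W · ω) n := by
  intro n
  have hWq : ∀ k ≤ n, Measurable[F n] fun ω => W k ω ^ q := fun k hk =>
    (hW.stronglyMeasurable_le hk).measurable.pow_const q
  have hsum : Measurable[F n] fun ω => ∑ k ∈ range (n + 1), γ k ω * (1 + W k ω ^ q) :=
    Finset.measurable_fun_sum (m := F n) _ fun k hk =>
      (hγ.stronglyMeasurable_le (mem_range_succ_iff.1 hk)).measurable.mul
        ((hWq k (mem_range_succ_iff.1 hk)).const_add 1)
  exact ((hsum.const_add 1).add (measurable_partialSups hWq)).stronglyMeasurable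

lemma stronglyAdapted_linearCoeff {γ W x : ℕ → Ω → ℝ} (hγ : StronglyAdapted F γ)
    (hW : StronglyAdapted F W) (hx : StronglyAdapted F x) (q : ℝ) :
    StronglyAdapted F fun n ω => linearCoeff q (γ · ω) (W · ω) (x · ω) n := fun n =>
  (((((hγ n).measurable.const_sub 1).mul (hW n).measurable).pow_const (q - 1)).const_mul
    (2 * q)).mul (hx n).measurable |>.stronglyMeasurable

variable {Φ M : ℕ → Ω → ι → ℝ} (S : Matrix ι ι ℝ) (hΦ : StronglyAdapted F Φ)
include hΦ

lemma stronglyMeasurable_infoMatrix_succ (n : ℕ) :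
    StronglyMeasurable[F n] fun ω => infoMatrix S (Φ · ω) (n + 1) :=
  stronglyMeasurable_infoMatrix fun _ hk => hΦ.stronglyMeasurable_le (Nat.lt_succ_iff.1 hk)

variable [Fintype ι]

lemma stronglyAdapted_traceStep : StronglyAdapted F fun n ω => traceStep S (Φ · ω) n := fun n =>
  (stronglyMeasurable_dotProduct (hΦ n) (hΦ n)).div
    (stronglyMeasurable_trace (stronglyMeasurable_infoMatrix_succ S hΦ n))

lemma stronglyAdapted_explosionCoeff [DecidableEq ι] :
    StronglyAdapted F fun n ω => explosionCoeff S (Φ · ω) n := fun n =>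
  stronglyMeasurable_quadForm_inv (stronglyMeasurable_infoMatrix_succ S hΦ n) (hΦ n) (hΦ n)

variable (hM : StronglyAdapted F M)
include hM

lemma stronglyAdapted_traceEnergy :
    StronglyAdapted F fun n ω => traceEnergy S (Φ · ω) (M · ω) n := fun n =>
  (stronglyMeasurable_dotProduct (hM n) (hM n)).div
    (stronglyMeasurable_trace (stronglyMeasurable_infoMatrix fun _ hk =>
      hΦ.stronglyMeasurable_le hk.le))

lemma stronglyAdapted_traceCross :
    StronglyAdapted F fun n ω => traceCross S (Φ · ω) (M · ω) n := fun n =>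
  (stronglyMeasurable_dotProduct (hM n) (hΦ n)).div
    (stronglyMeasurable_trace (stronglyMeasurable_infoMatrix_succ S hΦ n))

lemma stronglyAdapted_quadCross [DecidableEq ι] :
    StronglyAdapted F fun n ω => quadCross S (Φ · ω) (M · ω) n := fun n =>
  stronglyMeasurable_quadForm_inv (stronglyMeasurable_infoMatrix_succ S hΦ n) (hΦ n) (hM n)

end Adaptedness

section MartingaleTransforms

open Asymptotics

variable {Ω : Type*} {m0 : MeasurableSpace Ω} {μ : Measure Ω} [IsFiniteMeasure μ]
  {F : Filtration ℕ m0}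

lemma exists_exponent_mul_le {a s : ℝ} (hs : 0 < s) (hsa : s < a) :
    ∃ r, 1 < r ∧ r ≤ 2 ∧ s * r ≤ a :=
  ⟨min 2 (a / s), lt_min one_lt_two ((one_lt_div hs).2 hsa), min_le_left _ _,
    (le_div_iff₀' hs).1 (min_le_right _ _)⟩

section LawOfLargeNumbers

variable {r q : ℝ} {γ W y : ℕ → Ω → ℝ} {ξ : ℕ → Ω → ℝ}

lemma ae_isLittleO_momentNormalizer_of_summable (hξ : LrMartingaleDifference F μ r ξ) (hr : 1 < r)
    (hr2 : r ≤ 2) (hγ : StronglyAdapted F γ) (hW : StronglyAdapted F W) (hy : StronglyAdapted F y)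
    (hγ0 : ∀ n ω, 0 ≤ γ n ω) (hW0 : ∀ n ω, 0 ≤ W n ω)
    (hdiv : ∀ᵐ ω ∂μ, Tendsto (fun n => ∑ k ∈ range n, γ k ω) atTop atTop)
    (hsum : ∀ᵐ ω ∂μ, Summable fun n => |y n ω / momentNormalizer q (γ · ω) (W · ω) n| ^ r) :
    ∀ᵐ ω ∂μ, (fun n => ∑ k ∈ range (n + 1), y k ω * ξ k ω) =o[atTop]
      momentNormalizer q (γ · ω) (W · ω) := by
  refine hξ.ae_isLittleO_sum_mul hr hr2 hy (stronglyAdapted_momentNormalizer hγ hW q)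
    (fun n ω => momentNormalizer_pos (hγ0 · ω) (hW0 · ω) n)
    (fun ω => monotone_momentNormalizer (hγ0 · ω) (hW0 · ω)) ?_ hsum
  filter_upwards [hdiv] with ω hω
  exact tendsto_atTop_mono (fun n => one_add_sum_step_le_momentNormalizer (hγ0 · ω) (hW0 · ω) n)
    (tendsto_atTop_add_const_left _ 1 (hω.comp (tendsto_add_atTop_nat 1)))

lemma ae_isLittleO_momentNormalizer_of_le (hξ : LrMartingaleDifference F μ r ξ) (hr : 1 < r)
    (hr2 : r ≤ 2) (hγ : StronglyAdapted F γ) (hW : StronglyAdapted F W) (hy : StronglyAdapted F y)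
    (hγ0 : ∀ n ω, 0 ≤ γ n ω) (hW0 : ∀ n ω, 0 ≤ W n ω)
    (hdiv : ∀ᵐ ω ∂μ, Tendsto (fun n => ∑ k ∈ range n, γ k ω) atTop atTop)
    (hle : ∀ᵐ ω ∂μ, ∃ C, ∀ n, |y n ω| ^ r ≤ C * (γ n ω * (1 + W n ω ^ q))) :
    ∀ᵐ ω ∂μ, (fun n => ∑ k ∈ range (n + 1), y k ω * ξ k ω) =o[atTop]
      momentNormalizer q (γ · ω) (W · ω) := by
  refine ae_isLittleO_momentNormalizer_of_summable hξ hr hr2 hγ hW hy hγ0 hW0 hdiv ?_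
  filter_upwards [hle] with ω ⟨C, hC⟩
  exact summable_div_momentNormalizer_rpow (hγ0 · ω) (hW0 · ω) hr hC

end LawOfLargeNumbers

theorem ae_momentNormalizer_isBigO {γ W x ξ : ℕ → Ω → ℝ} {a q : ℝ}
    (hξ : LrMartingaleDifference F μ a ξ) (hq : 1 ≤ q) (hqa : 2 * q < a)
    (hγ : StronglyAdapted F γ) (hW : StronglyAdapted F W) (hx : StronglyAdapted F x)
    (hrec : ∀ ω, ContractiveRecursion (γ · ω) (W · ω) (x · ω) (ξ · ω))
    (hdiv : ∀ᵐ ω ∂μ, Tendsto (fun n => ∑ k ∈ range n, γ k ω) atTop atTop) :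
    ∀ᵐ ω ∂μ, momentNormalizer q (γ · ω) (W · ω) =O[atTop]
      fun n => 1 + ∑ k ∈ range (n + 1), γ k ω := by
  have hγ0 : ∀ n ω, 0 ≤ γ n ω := fun n ω => (hrec ω).step_nonneg n
  have hW0 : ∀ n ω, 0 ≤ W n ω := fun n ω => (hrec ω).nonneg n
  have hlin := ae_isLittleO_momentNormalizer_of_summable
    (hξ.mono_exponent two_pos (by linarith)) one_lt_two le_rfl hγ hW
    (stronglyAdapted_linearCoeff hγ hW hx q) hγ0 hW0 hdiv (q := q)
    (ae_of_all _ fun ω => summable_linearCoeff_div_momentNormalizer (hγ0 · ω) (hW0 · ω) hq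
      (hrec ω).step_le_one (hrec ω).sq_le)
  obtain ⟨r, hr1, hr2, hra⟩ := exists_exponent_mul_le (by linarith : 0 < 2 * q) hqa
  have hpow := ae_isLittleO_momentNormalizer_of_le
    (hξ.abs_rpow_sub_condExp (by linarith) hr1.le hra) hr1 hr2 hγ hW hγ hγ0 hW0 hdiv (q := q)
    (ae_of_all _ fun ω => ⟨1, fun n => by
      rw [abs_of_nonneg (hγ0 n ω), one_mul]
      exact (Real.rpow_le_self_of_le_one (hγ0 n ω) ((hrec ω).step_le_one n) hr1.le).trans
        (le_mul_of_one_le_right (hγ0 n ω)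
          (le_add_of_nonneg_right (Real.rpow_nonneg (hW0 n ω) q)))⟩)
  filter_upwards [hlin, hpow,
    (hξ.mono_exponent (by linarith : 0 < 2 * q) hqa.le).condExp_rpow_bounded]
    with ω hlin hpow ⟨C, hC⟩
  exact (hrec ω).momentNormalizer_isBigO hq hC hlin hpow

section Regression

variable {ι : Type*} [Fintype ι] [Nonempty ι] [DecidableEq ι] {S : Matrix ι ι ℝ}
  {Φ M : ℕ → Ω → ι → ℝ} {ξ : ℕ → Ω → ℝ} {a q : ℝ}

lemma ae_sum_quadCross_isLittleO (hξ : LrMartingaleDifference F μ 2 ξ) (hS : S.PosDef)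
    (hΦ : StronglyAdapted F Φ) (hM : StronglyAdapted F M) (hq : 1 ≤ q)
    (hdiv : ∀ᵐ ω ∂μ, Tendsto (fun n => ∑ k ∈ range n, traceStep S (Φ · ω) k) atTop atTop)
    (hcond : ∀ᵐ ω ∂μ, ∃ K, ∀ n,
      (infoMatrix S (Φ · ω) n).trace * (infoMatrix S (Φ · ω) n)⁻¹.trace ≤ K) :
    ∀ᵐ ω ∂μ, (fun n => ∑ k ∈ range (n + 1), quadCross S (Φ · ω) (M · ω) k * ξ k ω) =o[atTop]
      momentNormalizer q (traceStep S (Φ · ω)) (traceEnergy S (Φ · ω) (M · ω)) := by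
  refine ae_isLittleO_momentNormalizer_of_le hξ one_lt_two le_rfl (stronglyAdapted_traceStep S hΦ)
    (stronglyAdapted_traceEnergy S hΦ hM) (stronglyAdapted_quadCross S hΦ hM)
    (fun n ω => traceStep_nonneg hS _ n) (fun n ω => traceEnergy_nonneg hS _ _ n) hdiv ?_
  filter_upwards [hcond] with ω ⟨K, hK⟩
  refine ⟨K ^ 2, fun n => ?_⟩
  rw [Real.rpow_two, sq_abs]
  refine (sq_quadCross_le_quadDrop hS _ _ n).trans ?_
  simpa using quadDrop_pow_succ_le hS (Φ · ω) (M · ω) hK (p := 0) (by simpa using hq) n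

lemma ae_sum_explosionCoeff_isLittleO {v : ℝ} (hξ : LrMartingaleDifference F μ a ξ) (ha : 2 < a)
    (hvar : ∀ n, μ[fun ω => ξ n ω ^ 2 | F n] =ᵐ[μ] fun _ => v) (hS : S.PosDef)
    (hΦ : StronglyAdapted F Φ) (hM : StronglyAdapted F M)
    (hdiv : ∀ᵐ ω ∂μ, Tendsto (fun n => ∑ k ∈ range n, traceStep S (Φ · ω) k) atTop atTop)
    (hcond : ∀ᵐ ω ∂μ, ∃ K, ∀ n,
      (infoMatrix S (Φ · ω) n).trace * (infoMatrix S (Φ · ω) n)⁻¹.trace ≤ K) :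
    ∀ᵐ ω ∂μ, (fun n =>
        ∑ k ∈ range (n + 1), explosionCoeff S (Φ · ω) k * (ξ k ω ^ 2 - v)) =o[atTop]
      momentNormalizer q (traceStep S (Φ · ω)) (traceEnergy S (Φ · ω) (M · ω)) := by
  obtain ⟨r, hr1, hr2, hra⟩ := exists_exponent_mul_le two_pos ha
  have hlln := ae_isLittleO_momentNormalizer_of_le (q := q)
    (hξ.abs_rpow_sub_condExp two_pos hr1.le hra) hr1 hr2
    (stronglyAdapted_traceStep S hΦ) (stronglyAdapted_traceEnergy S hΦ hM)
    (stronglyAdapted_explosionCoeff S hΦ) (fun n ω => traceStep_nonneg hS _ n)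
    (fun n ω => traceEnergy_nonneg hS _ _ n) hdiv ?_
  · filter_upwards [hlln, ae_all_iff.2 hvar] with ω hω hv
    simpa only [Real.rpow_two, sq_abs, Pi.sub_apply, hv] using hω
  · filter_upwards [hcond] with ω ⟨K, hK⟩
    refine ⟨K, fun n => ?_⟩
    have hf := explosionCoeff_nonneg hS (Φ · ω) n
    have hW := Real.rpow_nonneg (traceEnergy_nonneg hS (Φ · ω) (M · ω) n) q
    rw [abs_of_nonneg hf]
    calc explosionCoeff S (Φ · ω) n ^ r ≤ explosionCoeff S (Φ · ω) n :=
          Real.rpow_le_self_of_le_one hf (explosionCoeff_lt_one hS _ n).le hr1.le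
      _ ≤ K * traceStep S (Φ · ω) n := explosionCoeff_le hS _ hK n
      _ ≤ _ := mul_le_mul_of_nonneg_left
          (le_mul_of_one_le_right (traceStep_nonneg hS _ n) (le_add_of_nonneg_right hW))
          (condition_bound_pos hS _ hK).le

theorem ae_tendsto_sum_quadDrop_pow {v : ℝ} {p : ℕ} (hξ : LrMartingaleDifference F μ a ξ)
    (hp : 1 ≤ p) (ha : 2 * p < a) (hvar : ∀ n, μ[fun ω => ξ n ω ^ 2 | F n] =ᵐ[μ] fun _ => v)
    (hS : S.PosDef) (hΦ : StronglyAdapted F Φ) (hM : StronglyAdapted F M)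
    (hMrec : ∀ n ω, M (n + 1) ω = M n ω + ξ n ω • Φ n ω)
    (hf : ∀ᵐ ω ∂μ, Tendsto (explosionCoeff S (Φ · ω)) atTop (𝓝 0))
    (hdet : ∀ᵐ ω ∂μ, Tendsto (fun n => Real.log (infoMatrix S (Φ · ω) n).det) atTop atTop)
    (hcond : ∀ᵐ ω ∂μ, ∃ K, ∀ n,
      (infoMatrix S (Φ · ω) n).trace * (infoMatrix S (Φ · ω) n)⁻¹.trace ≤ K) :
    ∀ᵐ ω ∂μ, Tendsto (fun n => (Real.log (infoMatrix S (Φ · ω) (n + 1)).det)⁻¹ *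
      ∑ k ∈ Icc 1 n, quadDrop S (Φ · ω) (M · ω) k ^ p) atTop (𝓝 (if p = 1 then v else 0)) := by
  have hp1 : (1 : ℝ) ≤ p := by exact_mod_cast hp
  obtain ⟨q, hpq, hqa⟩ : ∃ q : ℝ, p < q ∧ q < a / 2 := exists_between (by linarith)
  have hdiv : ∀ᵐ ω ∂μ, Tendsto (fun n => ∑ k ∈ range n, traceStep S (Φ · ω) k) atTop atTop := by
    filter_upwards [hf, hdet, hcond] with ω hf hdet ⟨K, hK⟩
    exact tendsto_sum_traceStep_atTop hS hdet hf hK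
  have hgrowth := ae_momentNormalizer_isBigO (q := q) hξ (by linarith) (by linarith)
    (stronglyAdapted_traceStep S hΦ) (stronglyAdapted_traceEnergy S hΦ hM)
    (stronglyAdapted_traceCross S hΦ hM)
    (fun ω => contractiveRecursion_traceEnergy hS _ _ (hMrec · ω)) hdiv
  have hcross := ae_sum_quadCross_isLittleO (q := q) (hξ.mono_exponent two_pos (by linarith)) hS hΦ
    hM (by linarith) hdiv hcond
  have hsq := ae_sum_explosionCoeff_isLittleO (q := q) hξ (by linarith) hvar hS hΦ hM hdiv hcond
  filter_upwards [hf, hdet, hcond, hgrowth, hcross, hsq] with ω hf hdet ⟨K, hK⟩ hR hcross hsq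
  exact tendsto_sum_quadDrop_pow hS hdet hf hK hR (by linarith) hp hpq.le (hMrec · ω) hcross hsq

end Regression

end MartingaleTransforms

section Mart

variable {Ω : Type*} {m0 : MeasurableSpace Ω} {F : Filtration ℕ m0} {d : ℕ}

lemma mart_succ (M0 : Ω → Fin d → ℝ) (Φ : ℕ → Ω → Fin d → ℝ) (ε : ℕ → Ω → ℝ) (n : ℕ) (ω : Ω) :
    Mart M0 Φ ε (n + 1) ω = Mart M0 Φ ε n ω + ε (n + 1) ω • Φ n ω := by
  rw [Mart, Mart, sum_range_succ, add_assoc]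

lemma stronglyAdapted_mart {M0 : Ω → Fin d → ℝ} {Φ : ℕ → Ω → Fin d → ℝ} {ε : ℕ → Ω → ℝ}
    (hM0 : StronglyMeasurable[F 0] M0) (hΦ : StronglyAdapted F Φ) (hε : StronglyAdapted F ε) :
    StronglyAdapted F (Mart M0 Φ ε) := fun n =>
  (hM0.mono (F.mono n.zero_le)).add <| Finset.stronglyMeasurable_fun_sum _ fun _ hk =>
    (hε.stronglyMeasurable_le (mem_range.1 hk)).smul
      (hΦ.stronglyMeasurable_le (mem_range.1 hk).le)

theorem asclt_increments_corollary_general {μ : Measure Ω} [IsFiniteMeasure μ] (hd : 0 < d)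
    {ε : ℕ → Ω → ℝ} {Φ : ℕ → Ω → Fin d → ℝ} {M0 : Ω → Fin d → ℝ} {S : Matrix (Fin d) (Fin d) ℝ}
    (hS : S.PosDef) {v : ℝ} {p : ℕ} (hp : 1 ≤ p) {a : ℝ} (ha : 2 * p < a)
    (hε : StronglyAdapted F ε) (hΦ : StronglyAdapted F Φ) (hM0 : StronglyMeasurable[F 0] M0)
    (hmds : ∀ n, μ[ε (n + 1) | F n] =ᵐ[μ] 0)
    (hvar : ∀ n, μ[fun ω => ε (n + 1) ω ^ 2 | F n] =ᵐ[μ] fun _ => v)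
    (hmomint : ∀ n, Integrable (fun ω => |ε (n + 1) ω| ^ a) μ)
    (hmom : ∀ᵐ ω ∂μ, ∃ C : ℝ, ∀ n, (μ[fun ω => |ε (n + 1) ω| ^ a | F n]) ω ≤ C)
    (hf : ∀ᵐ ω ∂μ, Tendsto (fun n => expl S Φ n ω) atTop (𝓝 0))
    (hdet : ∀ᵐ ω ∂μ, Tendsto (fun n => Real.log (Smat S Φ n ω).det) atTop atTop)
    (hcond : ∀ᵐ ω ∂μ,
      BddAbove (Set.range fun n => (Smat S Φ n ω).trace * (Smat S Φ n ω)⁻¹.trace)) :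
    ∀ᵐ ω ∂μ, Tendsto (fun n => (Real.log (Smat S Φ n ω).det)⁻¹ * ∑ k ∈ Icc 1 n,
      (Mart M0 Φ ε k ω ⬝ᵥ ((Smat S Φ (k - 1) ω)⁻¹ *ᵥ Mart M0 Φ ε k ω) -
        Mart M0 Φ ε k ω ⬝ᵥ ((Smat S Φ k ω)⁻¹ *ᵥ Mart M0 Φ ε k ω)) ^ p)
      atTop (𝓝 (if p = 1 then v else 0)) := by
  have : Nonempty (Fin d) := ⟨⟨0, hd⟩⟩
  have ha0 : 0 < a := (by positivity : (0 : ℝ) ≤ 2 * p).trans_lt ha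
  have hξ : LrMartingaleDifference F μ a fun n => ε (n + 1) :=
    ⟨fun n => hε (n + 1), fun n => (memLp_ofReal_iff_integrable_abs_rpow
      ((hε (n + 1)).mono (F.le _)).aestronglyMeasurable ha0).2 (hmomint n), hmds, hmom⟩
  have hdet' : ∀ᵐ ω ∂μ, Tendsto (fun n => Real.log (infoMatrix S (Φ · ω) n).det) atTop atTop := by
    filter_upwards [hdet] with ω hω using (tendsto_add_atTop_iff_nat 1).1 hω
  have hcond' : ∀ᵐ ω ∂μ, ∃ K, ∀ n,
      (infoMatrix S (Φ · ω) n).trace * (infoMatrix S (Φ · ω) n)⁻¹.trace ≤ K := by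
    filter_upwards [hcond] with ω ⟨K, hK⟩
    refine ⟨max K ((infoMatrix S (Φ · ω) 0).trace * (infoMatrix S (Φ · ω) 0)⁻¹.trace), ?_⟩
    rintro (_ | n)
    · exact le_max_right _ _
    · exact (hK ⟨n, rfl⟩).trans (le_max_left _ _)
  filter_upwards [ae_tendsto_sum_quadDrop_pow hξ hp ha hvar hS hΦ (stronglyAdapted_mart hM0 hΦ hε)
    (mart_succ M0 Φ ε) hf hdet' hcond'] with ω hω
  refine hω.congr fun n => congrArg _ (sum_congr rfl fun k hk => ?_)
  obtain ⟨j, rfl⟩ := Nat.exists_eq_add_of_le' (mem_Icc.1 hk).1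
  rfl

end Mart

/-- **Theorem 2, first part**: convergence of the even moments in the ASCLT for
vector martingale transforms. -/
theorem asclt_increments_corollary
    {Ω : Type*} {m0 : MeasurableSpace Ω} {μ : Measure Ω} [IsProbabilityMeasure μ]
    (F : Filtration ℕ m0) {d : ℕ} (hd : 0 < d)
    (ε : ℕ → Ω → ℝ) (Φ : ℕ → Ω → Fin d → ℝ) (M0 : Ω → Fin d → ℝ)
    (S L : Matrix (Fin d) (Fin d) ℝ) (hS : S.PosDef) (hL : L.PosDef)
    (σ : ℝ) (p : ℕ) (hp : 1 ≤ p) (a : ℝ) (ha : 2 * p < a)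
    (α : ℕ → Ω → ℝ)
    (hεadapt : ∀ n, StronglyMeasurable[F n] (ε n))
    (hεint : ∀ n, Integrable (ε n) μ)
    (hΦadapt : ∀ n, StronglyMeasurable[F n] (Φ n))
    (hM0 : StronglyMeasurable[F 0] M0)
    (hmds : ∀ n, μ[ε (n + 1)|F n] =ᵐ[μ] 0)
    (hvar : ∀ n, μ[fun ω => ε (n + 1) ω ^ 2|F n] =ᵐ[μ] fun _ => σ ^ 2)
    (hmomint : ∀ n, Integrable (fun ω => |ε (n + 1) ω| ^ a) μ)
    (hmom : ∀ᵐ ω ∂μ, ∃ C : ℝ, ∀ n, (μ[fun ω => |ε (n + 1) ω| ^ a|F n]) ω ≤ C)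
    (hf0 : ∀ᵐ ω ∂μ, Tendsto (fun n => expl S Φ n ω) atTop (𝓝 0))
    (hαmeas : ∀ n, Measurable (α n))
    (hαpos : ∀ n ω, 0 < α n ω)
    (hαmono : ∀ᵐ ω ∂μ, Monotone fun n => α n ω)
    (hαtop : ∀ᵐ ω ∂μ, Tendsto (fun n => α n ω) atTop atTop)
    (hconv : ∀ᵐ ω ∂μ, Tendsto (fun n => (α n ω)⁻¹ • Smat S Φ n ω) atTop (𝓝 L)) :
    let aseq : ℕ → Ω → ℝ := fun n ω =>
      Mart M0 Φ ε n ω ⬝ᵥ ((Smat S Φ (n - 1) ω)⁻¹ *ᵥ Mart M0 Φ ε n ω) -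
        Mart M0 Φ ε n ω ⬝ᵥ ((Smat S Φ n ω)⁻¹ *ᵥ Mart M0 Φ ε n ω)
    ∀ᵐ ω ∂μ, Tendsto (fun n =>
      (Real.log ((Smat S Φ n ω).det))⁻¹ * ∑ k ∈ Finset.Icc 1 n, aseq k ω ^ p)
      atTop (𝓝 (if p = 1 then σ ^ 2 else 0)) := by
  have : Nonempty (Fin d) := ⟨⟨0, hd⟩⟩
  refine asclt_increments_corollary_general hd hS hp ha hεadapt hΦadapt hM0 hmds hvar hmomint hmom
    hf0 ?_ ?_
  · filter_upwards [hαtop, hconv] with ω hα hA using tendsto_log_det_atTop hα hL.det_pos hA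
  · filter_upwards [hconv] with ω hA using (tendsto_trace_mul_trace_inv (fun n => (hαpos n ω).ne')
      (fun n => (posDef_infoMatrix hS _ (n + 1)).det_pos.ne'.isUnit)
      hL.det_pos.ne'.isUnit hA).bddAbove_range
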